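/- arXiv:1408.2170 — 9 statements merged into one kernel-verified Lean document; each statement's English description precedes it below -/
import Mathlib

section
/- Let R : Matrix (Fin 3) (Fin 3) ℝ be symmetric (R d e = R e d for all d, e). Define E a b c := (∑_e ε b e a * R e c) − 2*(∑_e ε c e a * R e b) + ε c b a * (∑_e R e e). Then for all a, b, c: (i) E a b c = E b a c, and (ii) E a b c = ∑_d (R d a * ε b d c + R d b * ε a d c). (Tensorially: in 3 dimensions, for a metric connection in an orthonormal frame, the tensor V^{ab}{}_c = ε^{bea}R_{ec} − 2ε_c{}^{ea}R_e{}^b + ε_c{}^{ba}R built from the Ricci curvature equals 2R^{d(a}ε^{b)}{}_{dc}, and in particular is symmetric in a,b.) -/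
/-!
The identity `E a b c = ∑ d, (R d a * ε b d c + R d b * ε a d c)` is linear in the six independent
entries of the symmetric matrix `R`, with coefficients given by the Levi-Civita symbol; it is
verified for each of the 27 index triples. Its right-hand side is visibly symmetric in `a, b`,
so the symmetry of `E` follows.
-/

noncomputable section

open Finset

/-- The Levi-Civita symbol on `Fin 3`. -/
def eps (a b c : Fin 3) : ℝ :=
  if (a, b, c) = ((0 : Fin 3), (1 : Fin 3), (2 : Fin 3)) ∨
     (a, b, c) = ((1 : Fin 3), (2 : Fin 3), (0 : Fin 3)) ∨
     (a, b, c) = ((2 : Fin 3), (0 : Fin 3), (1 : Fin 3)) then 1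
  else if (a, b, c) = ((0 : Fin 3), (2 : Fin 3), (1 : Fin 3)) ∨
          (a, b, c) = ((2 : Fin 3), (1 : Fin 3), (0 : Fin 3)) ∨
          (a, b, c) = ((1 : Fin 3), (0 : Fin 3), (2 : Fin 3)) then -1
  else 0

/-- The metric-form tensor `V_R a b c = ∑_d (R d a * ε b d c + R d b * ε a d c)`,
tensorially `V^{ab}{}_c = 2 R^{d(a} ε^{b)}{}_{dc}`. -/
def VR (R : Matrix (Fin 3) (Fin 3) ℝ) (a b c : Fin 3) : ℝ :=
  ∑ d, (R d a * eps b d c + R d b * eps a d c)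

/-- A Weyl-type tensor: `V a b c = V b a c` and `∑_a V a b a = 0`. -/
def IsWeyl (V : Fin 3 → Fin 3 → Fin 3 → ℝ) : Prop :=
  (∀ a b c, V a b c = V b a c) ∧ (∀ b, ∑ a, V a b a = 0)

/-- The quadratic obstruction `Q_{ab}{}^c = ε_{pq(a} V^{pr}{}_{b)} V^{qc}{}_r`. -/
def covQ (V : Fin 3 → Fin 3 → Fin 3 → ℝ) (a b c : Fin 3) : ℝ :=
  (1 / 2) * ∑ p, ∑ q, ∑ r, (eps p q a * V p r b + eps p q b * V p r a) * V q c r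

/-- The cubic scalar `S = ε_{abc} V^{ap}{}_q V^{bq}{}_r V^{cr}{}_p`. -/
def covS (V : Fin 3 → Fin 3 → Fin 3 → ℝ) : ℝ :=
  ∑ a, ∑ b, ∑ c, ∑ p, ∑ q, ∑ r, eps a b c * V a p q * V b q r * V c r p

/-- Symmetrisation (average) over two indices. -/
def sym2 (f : Fin 3 → Fin 3 → ℝ) (a b : Fin 3) : ℝ := (1 / 2) * (f a b + f b a)

/-- Symmetrisation (average) over three indices. -/
def sym3 (f : Fin 3 → Fin 3 → Fin 3 → ℝ) (a b c : Fin 3) : ℝ :=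
  (1 / 6) * ∑ π : Equiv.Perm (Fin 3),
    f (![a, b, c] (π 0)) (![a, b, c] (π 1)) (![a, b, c] (π 2))

/-- Symmetrisation (average) over four indices. -/
def sym4 (f : Fin 3 → Fin 3 → Fin 3 → Fin 3 → ℝ) (a b c d : Fin 3) : ℝ :=
  (1 / 24) * ∑ π : Equiv.Perm (Fin 4),
    f (![a, b, c, d] (π 0)) (![a, b, c, d] (π 1)) (![a, b, c, d] (π 2)) (![a, b, c, d] (π 3))

/-- Symmetrisation (average) over six indices. -/
def sym6 (f : Fin 3 → Fin 3 → Fin 3 → Fin 3 → Fin 3 → Fin 3 → ℝ)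
    (a b c d e f' : Fin 3) : ℝ :=
  (1 / 720) * ∑ π : Equiv.Perm (Fin 6),
    f (![a, b, c, d, e, f'] (π 0)) (![a, b, c, d, e, f'] (π 1)) (![a, b, c, d, e, f'] (π 2))
      (![a, b, c, d, e, f'] (π 3)) (![a, b, c, d, e, f'] (π 4)) (![a, b, c, d, e, f'] (π 5))

/-- `A^{ab} = ⊙(V^{ap}{}_q V^{bq}{}_p)`. -/
def covA (V : Fin 3 → Fin 3 → Fin 3 → ℝ) (a b : Fin 3) : ℝ :=
  ∑ p, ∑ q, V a p q * V b q p

/-- `B^{abc} = ⊙(V^{ap}{}_q V^{bq}{}_r V^{cr}{}_p)`. -/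
def covB (V : Fin 3 → Fin 3 → Fin 3 → ℝ) (a b c : Fin 3) : ℝ :=
  sym3 (fun a b c => ∑ p, ∑ q, ∑ r, V a p q * V b q r * V c r p) a b c

/-- `C^{abc} = ⊙(V^{ab}{}_p V^{pq}{}_r V^{cr}{}_q)`. -/
def covC (V : Fin 3 → Fin 3 → Fin 3 → ℝ) (a b c : Fin 3) : ℝ :=
  sym3 (fun a b c => ∑ p, ∑ q, ∑ r, V a b p * V p q r * V c r q) a b c

/-- `D^{abcd} = ⊙(V^{ab}{}_p V^{pq}{}_r V^{cr}{}_s V^{ds}{}_q)`. -/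
def covD (V : Fin 3 → Fin 3 → Fin 3 → ℝ) (a b c d : Fin 3) : ℝ :=
  sym4 (fun a b c d => ∑ p, ∑ q, ∑ r, ∑ s, V a b p * V p q r * V c r s * V d s q) a b c d

/-- `F^{abcd} = ⊙(V^{ab}{}_p V^{cd}{}_q V^{pr}{}_s V^{qs}{}_r)`. -/
def covF (V : Fin 3 → Fin 3 → Fin 3 → ℝ) (a b c d : Fin 3) : ℝ :=
  sym4 (fun a b c d => ∑ p, ∑ q, ∑ r, ∑ s, V a b p * V c d q * V p r s * V q s r) a b c d

/-- `J^{abcdef} = ⊙(V^{ab}{}_p V^{cd}{}_q V^{pq}{}_r V^{er}{}_s V^{st}{}_u V^{fu}{}_t)`. -/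
def covJ (V : Fin 3 → Fin 3 → Fin 3 → ℝ) (a b c d e f : Fin 3) : ℝ :=
  sym6 (fun a b c d e f => ∑ p, ∑ q, ∑ r, ∑ s, ∑ t, ∑ u,
    V a b p * V c d q * V p q r * V e r s * V s t u * V f u t) a b c d e f

/-- `K^{abcdef} = ⊙(V^{ab}{}_p V^{cd}{}_q V^{ep}{}_r V^{fq}{}_s V^{rt}{}_u V^{su}{}_t)`. -/
def covK (V : Fin 3 → Fin 3 → Fin 3 → ℝ) (a b c d e f : Fin 3) : ℝ :=
  sym6 (fun a b c d e f => ∑ p, ∑ q, ∑ r, ∑ s, ∑ t, ∑ u,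
    V a b p * V c d q * V e p r * V f q s * V r t u * V s u t) a b c d e f

/-- `L^{abcdef} = ⊙(V^{ab}{}_p V^{cd}{}_q V^{pq}{}_r V^{rs}{}_t V^{et}{}_u V^{fu}{}_s)`. -/
def covL (V : Fin 3 → Fin 3 → Fin 3 → ℝ) (a b c d e f : Fin 3) : ℝ :=
  sym6 (fun a b c d e f => ∑ p, ∑ q, ∑ r, ∑ s, ∑ t, ∑ u,
    V a b p * V c d q * V p q r * V r s t * V e t u * V f u s) a b c d e f

/-- The sextic obstruction
`T = 24J + 12K − 24L − 24B⊙B − 24C⊙C + 40B⊙C − 24A⊙D + 6A⊙F`. -/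
def covT (V : Fin 3 → Fin 3 → Fin 3 → ℝ) (a b c d e f : Fin 3) : ℝ :=
  24 * covJ V a b c d e f + 12 * covK V a b c d e f - 24 * covL V a b c d e f
    - 24 * sym6 (fun a b c d e f => covB V a b c * covB V d e f) a b c d e f
    - 24 * sym6 (fun a b c d e f => covC V a b c * covC V d e f) a b c d e f
    + 40 * sym6 (fun a b c d e f => covB V a b c * covC V d e f) a b c d e f
    - 24 * sym6 (fun a b c d e f => covA V a b * covD V c d e f) a b c d e f
    + 6 * sym6 (fun a b c d e f => covA V a b * covF V c d e f) a b c d e f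

/-- In 3 dimensions, for a metric connection in an orthonormal frame, the tensor
`E a b c = ε^{bea}R_{ec} − 2ε_c{}^{ea}R_e{}^b + ε_c{}^{ba}R` built from a symmetric
Ricci tensor `R` is symmetric in `a, b` and equals `2R^{d(a}ε^{b)}{}_{dc}`. -/
theorem statement0 (R : Matrix (Fin 3) (Fin 3) ℝ) (hR : ∀ d e, R d e = R e d)
    (E : Fin 3 → Fin 3 → Fin 3 → ℝ)
    (hE : ∀ a b c, E a b c =
      (∑ e, eps b e a * R e c) - 2 * (∑ e, eps c e a * R e b) + eps c b a * (∑ e, R e e)) :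
    ∀ a b c, E a b c = E b a c ∧
      E a b c = ∑ d, (R d a * eps b d c + R d b * eps a d c) := by
  have key : ∀ a b c, E a b c = ∑ d, (R d a * eps b d c + R d b * eps a d c) := by
    intro a b c
    -- Orient the off-diagonal entries so that `ring` sees only six independent ones.
    have h10 := hR 1 0
    have h20 := hR 2 0
    have h21 := hR 2 1
    rw [hE]
    fin_cases a <;> fin_cases b <;> fin_cases c <;>
      simp [Fin.sum_univ_three, eps, h10, h20, h21] <;> ring
  intro a b c
  refine ⟨?_, key a b c⟩
  -- The right-hand side of `key` is manifestly symmetric in `a` and `b`.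
  rw [key a b c, key b a c]
  exact Finset.sum_congr rfl fun d _ => add_comm _ _
end
end

section
/- (a) For every symmetric matrix R : Matrix (Fin 3) (Fin 3) ℝ, the metric-form tensor V_R satisfies Q V_R a b c = 0 for all a, b, c. (b) There exists a Weyl-type tensor V and indices a, b, c with Q V a b c ≠ 0. (Thus the projectively invariant tensor Q_{ab}{}^c = ε_{pq(a}V^{pr}{}_{b)}V^{qc}{}_r must vanish for a metrisable 3-dimensional projective structure, whilst in general it does not.) -/
/-!
The vanishing of `Q` on `V_R` is a polynomial identity in the six independent entries of the
symmetric matrix `R`: `V_R` is linear in `R`, so each of the components of `Q` is a quadratic form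
in these entries, and `covQ_VR_eq_zero` checks by expansion that all its coefficients cancel.

The tensor with only nonzero entries `V 0 0 1 = V 1 1 2 = 1` shows that `Q` does not vanish in
general. It is symmetric in its upper indices, and trace-free because no nonzero entry repeats an
upper index as its lower one. In `Q_{22}{}^0 = ε_{pq2} V^{pr}{}_2 V^{q0}{}_r` only the term
`p = r = 1`, `q = 0` survives, so `Q_{22}{}^0 = ε_{102} = -1`.
-/

noncomputable section

open Finset

theorem covQ_VR_eq_zero (R : Matrix (Fin 3) (Fin 3) ℝ) (h : ∀ i j, R i j = R j i)
    (a b c : Fin 3) : covQ (VR R) a b c = 0 := by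
  -- Eliminating the entries below the diagonal leaves six independent variables for `ring`.
  have h1 := h 1 0
  have h2 := h 2 0
  have h3 := h 2 1
  fin_cases a <;> fin_cases b <;> fin_cases c <;>
    simp [covQ, VR, eps, Fin.sum_univ_three, h1, h2, h3] <;> ring

/-- (a) The quadratic obstruction `Q` vanishes on every metric-form tensor `V_R`;
(b) there is a Weyl-type tensor on which `Q` does not vanish. -/
theorem statement1 :
    (∀ R : Matrix (Fin 3) (Fin 3) ℝ, (∀ i j, R i j = R j i) →
      ∀ a b c, covQ (VR R) a b c = 0) ∧
    (∃ V : Fin 3 → Fin 3 → Fin 3 → ℝ, IsWeyl V ∧ ∃ a b c, covQ V a b c ≠ 0) := by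
  refine ⟨covQ_VR_eq_zero, fun a b c => if (a, b, c) = (0, 0, 1) ∨ (a, b, c) = (1, 1, 2) then 1 else 0,
    ⟨fun a b c => ?_, fun b => ?_⟩, 2, 2, 0, ?_⟩
  · fin_cases a <;> fin_cases b <;> simp
  · fin_cases b <;> simp
  · simp [covQ, eps, Fin.sum_univ_three]
end
end

section
/- Define the scalar S V := ∑_{a,b,c,p,q,r} ε a b c * V a p q * V b q r * V c r p. Then: (a) for every symmetric matrix R : Matrix (Fin 3) (Fin 3) ℝ, S V_R = 0; (b) there exists a Weyl-type tensor V with S V ≠ 0. (Thus the invariant scalar S = ε_{abc}V^{ap}{}_qV^{bq}{}_rV^{cr}{}_p must vanish for a metrisable 3-dimensional projective structure, whilst in general it does not.) -/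
/-!
Write `M_a` for the `3 × 3` matrix `(M_a)^p_q = V^{ap}_q`. Then `S = ε_{abc} tr (M_a M_b M_c)`, which
by cyclicity of the trace is `3 (tr (M_0 M_1 M_2) - tr (M_0 M_2 M_1))` (`covS_eq`).

For `V = V_R` with `R` symmetric this is a polynomial in the six entries of `R` that vanishes
identically. The conceptual reason: in an orthonormal eigenframe of `R`, with eigenvalues `r_i`,
one has `V^{ab}_c = (r_b - r_a) ε_{abc}`, and each of the two traces reduces to the single term
`(r_1 - r_0) (r_2 - r_1) (r_0 - r_2)`, so they cancel. The proof below checks the polynomial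
identity directly in an arbitrary frame.

For the second part, the sparse tensor `witnessV` has `S = -6`.
-/

noncomputable section

open Finset

/-- The cubic scalar as a difference of two traces,
`S = 3 (tr (M_0 M_1 M_2) - tr (M_0 M_2 M_1))` with `(M_a)^p_q = V^{ap}_q`. -/
lemma covS_eq (V : Fin 3 → Fin 3 → Fin 3 → ℝ) :
    covS V = 3 * (∑ p, ∑ q, ∑ r,
      (V 0 p q * V 1 q r * V 2 r p - V 0 p q * V 2 q r * V 1 r p)) := by
  simp [covS, eps, Fin.sum_univ_three]
  ring

/-- The Weyl-type tensor whose nonzero components are `V^{00}_0 = 1`,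
`V^{01}_1 = V^{10}_1 = -1` and `V^{12}_0 = V^{21}_0 = 1`. The first two kinds cancel in the trace;
the last one breaks the balance between the two cyclic orders in `covS_eq`. -/
def witnessV : Fin 3 → Fin 3 → Fin 3 → ℝ :=
  ![![![1, 0, 0], ![0, -1, 0], ![0, 0, 0]],
    ![![0, -1, 0], ![0, 0, 0], ![1, 0, 0]],
    ![![0, 0, 0], ![1, 0, 0], ![0, 0, 0]]]

lemma isWeyl_witnessV : IsWeyl witnessV := by
  constructor
  · intro a b c
    fin_cases a <;> fin_cases b <;> fin_cases c <;> simp [witnessV]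
  · intro b
    fin_cases b <;> simp [witnessV, Fin.sum_univ_three]

lemma covS_witnessV : covS witnessV = -6 := by
  rw [covS_eq]
  simp [witnessV, Fin.sum_univ_three]
  norm_num

lemma covS_VR (R : Matrix (Fin 3) (Fin 3) ℝ) (hR : ∀ i j, R i j = R j i) :
    covS (VR R) = 0 := by
  rw [covS_eq]
  simp [VR, eps, Fin.sum_univ_three, hR 1 0, hR 2 0, hR 2 1]
  ring

/-- (a) The cubic scalar `S` vanishes on every metric-form tensor `V_R`;
(b) there is a Weyl-type tensor on which `S` does not vanish. -/
theorem statement2 :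
    (∀ R : Matrix (Fin 3) (Fin 3) ℝ, (∀ i j, R i j = R j i) → covS (VR R) = 0) ∧
    (∃ V : Fin 3 → Fin 3 → Fin 3 → ℝ, IsWeyl V ∧ covS V ≠ 0) := by
  refine ⟨covS_VR, witnessV, isWeyl_witnessV, ?_⟩
  rw [covS_witnessV]
  norm_num
end
end

section
/- For every Weyl-type tensor V, the scalar S V := ∑_{a,b,c,p,q,r} ε a b c * V a p q * V b q r * V c r p satisfies S V = − ∑_{a,b,c} V a b c * Q V a b c. (Tensorially: S = ε_{abc}V^{ap}{}_qV^{bq}{}_rV^{cr}{}_p = −V^{ab}{}_c Q_{ab}{}^c.) -/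
/-!
Contracting `Q` with `V^{ab}{}_c`, which is symmetric in `a, b`, makes the two terms of the
symmetrisation in `Q` contribute equally, so that
`V^{ab}{}_c Q_{ab}{}^c = ε_{pqa} V^{pr}{}_b V^{ab}{}_c V^{qc}{}_r`.  The factors
`V^{pr}{}_b V^{ab}{}_c V^{qc}{}_r` form the same cyclic chain as in `S`, but with the free
indices in the order `p, a, q`; the antisymmetry `ε_{pqa} = -ε_{paq}` gives the sign.
-/

noncomputable section

open Finset

theorem eps_swap_right (a b c : Fin 3) : eps a c b = -eps a b c := by
  fin_cases a <;> fin_cases b <;> fin_cases c <;> simp [eps]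

/-- The cyclic chain of `covS`, with its sums ordered as in the contraction of `V` with `covQ`. -/
theorem covS_reindex (V : Fin 3 → Fin 3 → Fin 3 → ℝ) :
    covS V = ∑ a, ∑ b, ∑ c, ∑ p, ∑ q, ∑ r, eps p a q * V p r b * V a b c * V q c r := by
  unfold covS
  simp only [← Fintype.sum_prod_type']
  exact Fintype.sum_equiv
    { toFun := fun (a, b, c, p, q, r) => (b, q, r, a, c, p)
      invFun := fun (a, b, c, p, q, r) => (p, a, q, r, b, c)
      left_inv := fun _ => rfl
      right_inv := fun _ => rfl } _ _ (fun _ => rfl)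

/-- For `V` symmetric in its upper indices, the symmetrisation in `covQ` drops out. -/
theorem sum_mul_covQ (V : Fin 3 → Fin 3 → Fin 3 → ℝ) (hV : ∀ a b c, V a b c = V b a c) :
    ∑ a, ∑ b, ∑ c, V a b c * covQ V a b c =
      ∑ a, ∑ b, ∑ c, V a b c * ∑ p, ∑ q, ∑ r, eps p q a * V p r b * V q c r := by
  set F : Fin 3 → Fin 3 → Fin 3 → ℝ := fun a b c =>
    ∑ p, ∑ q, ∑ r, eps p q a * V p r b * V q c r with hF
  have hQ : ∀ a b c, V a b c * covQ V a b c =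
      (1 / 2) * (V a b c * F a b c) + (1 / 2) * (V b a c * F b a c) := by
    intro a b c
    have h : covQ V a b c = (1 / 2) * (F a b c + F b a c) := by
      simp only [covQ, hF, add_mul, sum_add_distrib]
    rw [h, hV b a c]
    ring
  have hswap : ∑ a, ∑ b, ∑ c, V b a c * F b a c = ∑ a, ∑ b, ∑ c, V a b c * F a b c :=
    sum_comm
  simp only [hQ, sum_add_distrib, ← mul_sum]
  rw [hswap]
  ring

/-- For every Weyl-type tensor `V`, `S = −V^{ab}{}_c Q_{ab}{}^c`. -/
theorem statement3 (V : Fin 3 → Fin 3 → Fin 3 → ℝ) (hV : IsWeyl V) :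
    covS V = - ∑ a, ∑ b, ∑ c, V a b c * covQ V a b c := by
  rw [sum_mul_covQ V hV.1, covS_reindex]
  simp only [mul_sum, ← sum_neg_distrib]
  refine sum_congr rfl fun a _ => sum_congr rfl fun b _ => sum_congr rfl fun c _ =>
    sum_congr rfl fun p _ => sum_congr rfl fun q _ => sum_congr rfl fun r _ => ?_
  rw [eps_swap_right p q a]
  ring
end
end

section
/- For every Weyl-type tensor V and all a, b, c: Sym_{abc}( 2 * ∑_{p,q,r} ε p q a * Q V p r b * V c r q ) = C V a b c − 2 * B V a b c, where Sym_{abc} is the average over the 6 permutations of (a,b,c). (Tensorially: 2ε^{pq(a}Q_{pr}{}^{b}V^{c)r}{}_q = C^{abc} − 2B^{abc}, so the cubic obstruction C − 2B arises from the quadratic obstruction Q.) -/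
/-!
Writing out `Q`, the unsymmetrised left-hand side is the sum of two terms quadratic in `ε`:
`ε_{pqa} ε_{stp} V^{su}_r V^{tb}_u V^{cr}_q` and `ε_{pqa} ε_{str} V^{su}_p V^{tb}_u V^{cr}_q`.
Each product of two `ε`s is a determinant of Kronecker deltas (`eps_contract_one`,
`eps_contract_zero`). With `B⁰`, `C⁰` the unsymmetrised versions of `B`, `C`, the first term becomes
`C⁰_{abc} - B⁰_{acb}`. In the second, tracelessness of `V` kills three of the six delta terms
and leaves `C⁰_{abc} - C⁰_{cab} - B⁰_{acb}`. Symmetrising the sum gives `C - 2B`.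
-/

noncomputable section

open Finset

/-- The contraction `ε_{pqa} ε_{stp} = δ_{qs} δ_{at} - δ_{qt} δ_{as}`, paired with an array `F`. -/
lemma eps_contract_one (F : Fin 3 → Fin 3 → Fin 3 → ℝ) (a : Fin 3) :
    ∑ p, ∑ q, ∑ s, ∑ t, eps p q a * eps s t p * F q s t = ∑ q, (F q q a - F q a q) := by
  fin_cases a <;> simp [Fin.sum_univ_three, eps] <;> ring

/-- The expansion of `ε_{pqa} ε_{str}` as a `3 × 3` determinant of Kronecker deltas, paired with
an array `G`. -/
lemma eps_contract_zero (G : Fin 3 → Fin 3 → Fin 3 → Fin 3 → Fin 3 → ℝ) (a : Fin 3) :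
    ∑ p, ∑ q, ∑ s, ∑ t, ∑ r, eps p q a * eps s t r * G p q s t r
      = ∑ p, ∑ q, (G p q p q a + G p q q a p + G p q a p q
          - G p q q p a - G p q a q p - G p q p a q) := by
  fin_cases a <;> simp [Fin.sum_univ_three, eps] <;> ring

lemma sym3_eq (f : Fin 3 → Fin 3 → Fin 3 → ℝ) (a b c : Fin 3) :
    sym3 f a b c
      = (1 / 6) * (f a b c + f a c b + f b a c + f b c a + f c a b + f c b a) := by
  have h : (univ : Finset (Equiv.Perm (Fin 3))) =
      {1, Equiv.swap 1 2, Equiv.swap 0 1, Equiv.swap 0 1 * Equiv.swap 1 2,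
        Equiv.swap 1 2 * Equiv.swap 0 1, Equiv.swap 0 2} := by decide
  rw [sym3, h]
  repeat rw [sum_insert (by decide)]
  rw [sum_singleton]
  simp [Equiv.swap_apply_def]
  ring

/-- Expanding `Q` in the unsymmetrised left-hand side. -/
lemma two_mul_eps_covQ (V : Fin 3 → Fin 3 → Fin 3 → ℝ) (a b c : Fin 3) :
    2 * ∑ p, ∑ q, ∑ r, eps p q a * covQ V p r b * V c r q
      = (∑ p, ∑ q, ∑ s, ∑ t, eps p q a * eps s t p *
            ∑ r, ∑ u, V s u r * V t b u * V c r q)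
        + ∑ p, ∑ q, ∑ s, ∑ t, ∑ r, eps p q a * eps s t r *
            ∑ u, V s u p * V t b u * V c r q := by
  rw [mul_sum, ← sum_add_distrib]
  refine sum_congr rfl fun p _ => ?_
  rw [mul_sum, ← sum_add_distrib]
  refine sum_congr rfl fun q _ => ?_
  simp only [covQ, Fin.sum_univ_three]
  ring

/-- The left-hand side before symmetrisation. -/
lemma two_mul_eps_covQ_eq (V : Fin 3 → Fin 3 → Fin 3 → ℝ) (hV : IsWeyl V) (a b c : Fin 3) :
    2 * ∑ p, ∑ q, ∑ r, eps p q a * covQ V p r b * V c r q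
      = 2 * (∑ p, ∑ q, ∑ r, V a b p * V p q r * V c r q)
        - (∑ p, ∑ q, ∑ r, V c a p * V p q r * V b r q)
        - 2 * ∑ p, ∑ q, ∑ r, V a p q * V c q r * V b r p := by
  obtain ⟨hs, ht⟩ := hV
  -- The trace-free condition in the form that solves for one diagonal entry.
  have ht' : ∀ d, V d 2 2 = -V d 0 0 - V d 1 1 := fun d => by
    have h := ht d
    rw [Fin.sum_univ_three, hs 0 d, hs 1 d, hs 2 d] at h
    linarith
  rw [two_mul_eps_covQ, eps_contract_one, eps_contract_zero]
  simp only [Fin.sum_univ_three, hs 0 b, hs 1 b, hs 2 b]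
  rw [ht' c]
  simp only [hs 1 0, hs 2 0, hs 2 1]
  have h0 := ht' 0
  have h1 := ht' 1
  have h2 := ht' 2
  simp only [hs 1 0, hs 2 0, hs 2 1] at h1 h2
  simp only [h0, h1, h2]
  ring

/-- For every Weyl-type tensor `V`, `2ε^{pq(a}Q_{pr}{}^{b}V^{c)r}{}_q = C^{abc} − 2B^{abc}`. -/
theorem statement4 (V : Fin 3 → Fin 3 → Fin 3 → ℝ) (hV : IsWeyl V) (a b c : Fin 3) :
    sym3 (fun a b c => 2 * ∑ p, ∑ q, ∑ r, eps p q a * covQ V p r b * V c r q) a b c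
      = covC V a b c - 2 * covB V a b c := by
  simp only [covC, covB, sym3_eq, two_mul_eps_covQ_eq V hV]
  -- The unsymmetrised `C` is symmetric in its first two indices, while the unsymmetrised `B` is
  -- only permuted by the symmetrisation.
  simp only [hV.1 b a, hV.1 c a, hV.1 c b]
  ring
end
end

section
/- (a) For every symmetric matrix R : Matrix (Fin 3) (Fin 3) ℝ, the metric-form tensor V_R satisfies F V_R a b c d = 2 * D V_R a b c d for all a, b, c, d. (b) There exists a Weyl-type tensor V and indices a, b, c, d with F V a b c d ≠ 2 * D V a b c d. (Theorem 2, second obstruction: F^{abcd} − 2D^{abcd} vanishes for metrisable projective structures but not in general.) -/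
/-!
A totally symmetrised 4-tensor is determined by its quartic form, so `F = 2D` may be tested on
the diagonal. Write `M(x)` for the matrix `∑ a, x a * V a b c` and `v = x ᵥ* M(x)`. The quartic
forms of `F` and `D` are `tr (M(v)²)` and `tr (M(v) M(x)²)` respectively. For `V = V_R` the matrix
`M(x)` is `[Rx] - R[x]`, with `[y]` the matrix of the cross product by `y`, and
`tr (M(v)²) = 2 tr (M(v) M(x)²)` is a polynomial identity in the entries of `R` and `x`
(`quartic_VR`). The polarisation identity `polarisation` then gives (a).

For (b), a sparse integer tensor has `F 0 0 0 0 = 2` and `D 0 0 0 0 = 0`.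
-/

noncomputable section

open Finset

/-- The contraction `M(x)^b_c = x_a V^{ab}_c` of the first upper index of `V` with a covector. -/
def contr (V : Fin 3 → Fin 3 → Fin 3 → ℝ) (x : Fin 3 → ℝ) : Matrix (Fin 3) (Fin 3) ℝ :=
  Matrix.of fun b c => ∑ a, x a * V a b c

lemma contr_add (V : Fin 3 → Fin 3 → Fin 3 → ℝ) (x y : Fin 3 → ℝ) :
    contr V (x + y) = contr V x + contr V y := by
  ext b c
  simp [contr, add_mul, Finset.sum_add_distrib]

lemma contr_single (V : Fin 3 → Fin 3 → Fin 3 → ℝ) (a b c : Fin 3) :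
    contr V (Pi.single a 1) b c = V a b c := by
  simp [contr, Pi.single_apply]

/-- The 4-linear form of `F - 2D` before symmetrisation. -/
def formFD (V : Fin 3 → Fin 3 → Fin 3 → ℝ) (x y z w : Fin 3 → ℝ) : ℝ :=
  (contr V (Matrix.vecMul y (contr V x)) * contr V (Matrix.vecMul w (contr V z))).trace
    - 2 * (contr V (Matrix.vecMul y (contr V x)) * contr V z * contr V w).trace

lemma contr_vecMul_single (V : Fin 3 → Fin 3 → Fin 3 → ℝ) (a b q r : Fin 3) :
    contr V (Matrix.vecMul (Pi.single b 1) (contr V (Pi.single a 1))) q r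
      = ∑ p, V a b p * V p q r := by
  rw [contr, Matrix.of_apply]
  simp [contr_single]

lemma formFD_single (V : Fin 3 → Fin 3 → Fin 3 → ℝ) (a b c d : Fin 3) :
    formFD V (Pi.single a 1) (Pi.single b 1) (Pi.single c 1) (Pi.single d 1)
      = (∑ p, ∑ q, ∑ r, ∑ s, V a b p * V c d q * V p r s * V q s r)
        - 2 * ∑ p, ∑ q, ∑ r, ∑ s, V a b p * V p q r * V c r s * V d s q := by
  simp only [formFD, Matrix.trace, Matrix.diag_apply, Matrix.mul_apply, contr_vecMul_single,
    contr_single, Fin.sum_univ_three]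
  ring

/-- Summation over the permutations of four symbols, written out. -/
lemma sum_perm_four (g : Fin 4 → Fin 4 → Fin 4 → Fin 4 → ℝ) :
    ∑ π : Equiv.Perm (Fin 4), g (π 0) (π 1) (π 2) (π 3) =
      g 0 1 2 3 + g 0 1 3 2 + g 0 2 1 3 + g 0 2 3 1 + g 0 3 1 2 + g 0 3 2 1
      + g 1 0 2 3 + g 1 0 3 2 + g 1 2 0 3 + g 1 2 3 0 + g 1 3 0 2 + g 1 3 2 0
      + g 2 0 1 3 + g 2 0 3 1 + g 2 1 0 3 + g 2 1 3 0 + g 2 3 0 1 + g 2 3 1 0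
      + g 3 0 1 2 + g 3 0 2 1 + g 3 1 0 2 + g 3 1 2 0 + g 3 2 0 1 + g 3 2 1 0 := by
  have h : (Finset.univ : Finset (Equiv.Perm (Fin 4))).val.map
      (fun π => (π 0, π 1, π 2, π 3)) =
      {(0, 1, 2, 3), (0, 1, 3, 2), (0, 2, 1, 3), (0, 2, 3, 1), (0, 3, 1, 2), (0, 3, 2, 1),
        (1, 0, 2, 3), (1, 0, 3, 2), (1, 2, 0, 3), (1, 2, 3, 0), (1, 3, 0, 2), (1, 3, 2, 0),
        (2, 0, 1, 3), (2, 0, 3, 1), (2, 1, 0, 3), (2, 1, 3, 0), (2, 3, 0, 1), (2, 3, 1, 0),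
        (3, 0, 1, 2), (3, 0, 2, 1), (3, 1, 0, 2), (3, 1, 2, 0), (3, 2, 0, 1), (3, 2, 1, 0)} := by
    decide
  have h' := congrArg (fun m => (m.map fun t => g t.1 t.2.1 t.2.2.1 t.2.2.2).sum) h
  simp only [Multiset.map_map, Function.comp_def] at h'
  refine h'.trans ?_
  simp only [Multiset.insert_eq_cons, Multiset.map_cons, Multiset.map_singleton,
    Multiset.sum_cons, Multiset.sum_singleton]
  ring

/-- Polarisation: if a form additive in each of four slots vanishes on the diagonal, then its
symmetrisation vanishes. -/
lemma polarisation {E : Type*} [AddCommGroup E] (T : E → E → E → E → ℝ)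
    (h₁ : ∀ x x' y z w, T (x + x') y z w = T x y z w + T x' y z w)
    (h₂ : ∀ x y y' z w, T x (y + y') z w = T x y z w + T x y' z w)
    (h₃ : ∀ x y z z' w, T x y (z + z') w = T x y z w + T x y z' w)
    (h₄ : ∀ x y z w w', T x y z (w + w') = T x y z w + T x y z w')
    (h : ∀ x, T x x x x = 0) (e : Fin 4 → E) :
    ∑ π : Equiv.Perm (Fin 4), T (e (π 0)) (e (π 1)) (e (π 2)) (e (π 3)) = 0 := by
  rw [sum_perm_four fun i j k l => T (e i) (e j) (e k) (e l)]
  -- Inclusion-exclusion: the alternating sum of `T s s s s` over all partial sums `s` of the `e i`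
  -- keeps exactly the terms in which every `e i` occurs once.
  have k0 := h (e 0)
  have k1 := h (e 1)
  have k2 := h (e 2)
  have k3 := h (e 3)
  have k01 := h (e 0 + e 1)
  have k02 := h (e 0 + e 2)
  have k03 := h (e 0 + e 3)
  have k12 := h (e 1 + e 2)
  have k13 := h (e 1 + e 3)
  have k23 := h (e 2 + e 3)
  have k012 := h (e 0 + e 1 + e 2)
  have k013 := h (e 0 + e 1 + e 3)
  have k023 := h (e 0 + e 2 + e 3)
  have k123 := h (e 1 + e 2 + e 3)
  have k0123 := h (e 0 + e 1 + e 2 + e 3)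
  simp only [h₁, h₂, h₃, h₄] at k01 k02 k03 k12 k13 k23 k012 k013 k023 k123 k0123
  linear_combination k0123 - k012 - k013 - k023 - k123 + k01 + k02 + k03 + k12 + k13 + k23
    - k0 - k1 - k2 - k3

/-- The matrix `[y]` of the cross product `z ↦ y × z`. -/
def crossMat (y : Fin 3 → ℝ) : Matrix (Fin 3) (Fin 3) ℝ :=
  !![0, -y 2, y 1; y 2, 0, -y 0; -y 1, y 0, 0]

/-- The matrix `M(x) = [Rx] - R[x]` of a metric-form tensor, with `[y]` the cross-product matrix. -/
lemma contr_VR (R : Matrix (Fin 3) (Fin 3) ℝ) (hR : ∀ i j, R i j = R j i) (x : Fin 3 → ℝ) :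
    contr (VR R) x = crossMat (R.mulVec x) - R * crossMat x := by
  ext b c
  fin_cases b <;> fin_cases c <;>
    simp [contr, crossMat, VR, eps, Fin.sum_univ_three, Matrix.mul_apply, Matrix.mulVec, dotProduct,
      hR 1 0, hR 2 0, hR 2 1] <;> ring

set_option maxHeartbeats 4000000 in
lemma quartic_VR (R : Matrix (Fin 3) (Fin 3) ℝ) (hR : ∀ i j, R i j = R j i) (x : Fin 3 → ℝ) :
    formFD (VR R) x x x x = 0 := by
  simp only [formFD, contr_VR R hR]
  simp [Matrix.trace, Matrix.mul_apply, Matrix.mulVec, Matrix.vecMul, dotProduct, crossMat,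
    Fin.sum_univ_three, hR 1 0, hR 2 0, hR 2 1]
  ring

lemma covF_VR (R : Matrix (Fin 3) (Fin 3) ℝ) (hR : ∀ i j, R i j = R j i) (a b c d : Fin 3) :
    covF (VR R) a b c d = 2 * covD (VR R) a b c d := by
  have key := polarisation (formFD (VR R))
    (fun x x' y z w => by
      simp only [formFD, contr_add, Matrix.vecMul_add, Matrix.add_mul, Matrix.trace_add]; ring)
    (fun x y y' z w => by
      simp only [formFD, contr_add, Matrix.add_vecMul, Matrix.add_mul, Matrix.trace_add]; ring)
    (fun x y z z' w => by
      simp only [formFD, contr_add, Matrix.vecMul_add, Matrix.add_mul, Matrix.mul_add,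
        Matrix.trace_add]
      ring)
    (fun x y z w w' => by
      simp only [formFD, contr_add, Matrix.add_vecMul, Matrix.mul_add, Matrix.trace_add]; ring)
    (quartic_VR R hR) (fun i => Pi.single (![a, b, c, d] i) 1)
  simp only [formFD_single, Finset.sum_sub_distrib, ← Finset.mul_sum] at key
  simp only [covF, covD, sym4]
  linear_combination (1 / 24) * key

/-- A Weyl-type tensor with `F ≠ 2D`. Its nonzero components are `V^{00}_1 = V^{11}_1 = 1` and
`V^{01}_0 = V^{10}_0 = -1`. -/
def exV : Fin 3 → Fin 3 → Fin 3 → ℝ :=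
  ![![![0, 1, 0], ![-1, 0, 0], ![0, 0, 0]],
    ![![-1, 0, 0], ![0, 1, 0], ![0, 0, 0]],
    ![![0, 0, 0], ![0, 0, 0], ![0, 0, 0]]]

lemma isWeyl_exV : IsWeyl exV := by
  constructor
  · intro a b c
    fin_cases a <;> fin_cases b <;> fin_cases c <;> simp [exV]
  · intro b
    fin_cases b <;> simp [exV, Fin.sum_univ_three]

lemma sym4_diag (f : Fin 3 → Fin 3 → Fin 3 → Fin 3 → ℝ) (a : Fin 3) :
    sym4 f a a a a = f a a a a := by
  have h : ∀ i : Fin 4, ![a, a, a, a] i = a := by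
    intro i
    fin_cases i <;> rfl
  simp [sym4, h, Fintype.card_perm, Nat.factorial]

lemma covF_exV : covF exV 0 0 0 0 = 2 := by
  rw [covF, sym4_diag]
  simp [exV, Fin.sum_univ_three]
  norm_num

lemma covD_exV : covD exV 0 0 0 0 = 0 := by
  rw [covD, sym4_diag]
  simp [exV, Fin.sum_univ_three]

/-- (a) `F = 2D` on every metric-form tensor `V_R`;
(b) there is a Weyl-type tensor for which `F ≠ 2D` at some indices. -/
theorem statement6 :
    (∀ R : Matrix (Fin 3) (Fin 3) ℝ, (∀ i j, R i j = R j i) →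
      ∀ a b c d, covF (VR R) a b c d = 2 * covD (VR R) a b c d) ∧
    (∃ V : Fin 3 → Fin 3 → Fin 3 → ℝ, IsWeyl V ∧
      ∃ a b c d, covF V a b c d ≠ 2 * covD V a b c d) := by
  refine ⟨covF_VR, exV, isWeyl_exV, 0, 0, 0, 0, ?_⟩
  rw [covF_exV, covD_exV]
  norm_num
end
end

section
/- (a) For every symmetric matrix R : Matrix (Fin 3) (Fin 3) ℝ, the metric-form tensor V_R satisfies J V_R a b c d e f = 2 * L V_R a b c d e f for all a, b, c, d, e, f. (b) There exists a Weyl-type tensor V and indices with J V a b c d e f ≠ 2 * L V a b c d e f. (Theorem 2, third obstruction: J^{abcdef} − 2L^{abcdef} vanishes for metrisable projective structures but not in general.) -/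
/-!
Part (a) already holds before contracting with the head `V^{ab}_p V^{cd}_q V^{pq}_r` shared by
`J` and `L`: for `V = V_R`, the tails satisfy the cubic identity
`V^{r(e}_s V^{f)u}_t V^{st}_u = 2 V^{rs}_t V^{(e|t|}_u V^{f)u}_s` with the index `r` free
(`jTail_VR`). Only the symmetrisation in `e, f` is needed, and the full symmetrisation contains it,
so `J - 2L` vanishes (`sym6_eq_zero`). The cubic identity is a polynomial identity in the six
independent entries of `R`.

For part (b), the tensor whose only nonzero components are `V^{00}_1 = V^{11}_0 = 1` is trace-free,
and has `J^{000000} = 1`, `L^{000000} = 0`.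
-/

noncomputable section

open Finset

/-- A six-index tensor antisymmetric in its last two indices has zero total symmetrisation. -/
lemma sym6_eq_zero (F : Fin 3 → Fin 3 → Fin 3 → Fin 3 → Fin 3 → Fin 3 → ℝ)
    (hF : ∀ a b c d e f, F a b c d e f + F a b c d f e = 0) (a b c d e f : Fin 3) :
    sym6 F a b c d e f = 0 := by
  unfold sym6
  set v : Fin 6 → Fin 3 := ![a, b, c, d, e, f]
  have hswap := Equiv.sum_comp (Equiv.mulRight (Equiv.swap (4 : Fin 6) 5))
    (fun π : Equiv.Perm (Fin 6) =>
      F (v (π 0)) (v (π 1)) (v (π 2)) (v (π 3)) (v (π 4)) (v (π 5)))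
  have h0 : Equiv.swap (4 : Fin 6) 5 0 = 0 := by decide
  have h1 : Equiv.swap (4 : Fin 6) 5 1 = 1 := by decide
  have h2 : Equiv.swap (4 : Fin 6) 5 2 = 2 := by decide
  have h3 : Equiv.swap (4 : Fin 6) 5 3 = 3 := by decide
  simp only [Equiv.coe_mulRight, Equiv.Perm.mul_apply, h0, h1, h2, h3,
    Equiv.swap_apply_left, Equiv.swap_apply_right] at hswap
  have hsum : (∑ π : Equiv.Perm (Fin 6),
      F (v (π 0)) (v (π 1)) (v (π 2)) (v (π 3)) (v (π 4)) (v (π 5)))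
      + ∑ π : Equiv.Perm (Fin 6),
      F (v (π 0)) (v (π 1)) (v (π 2)) (v (π 3)) (v (π 5)) (v (π 4)) = 0 := by
    rw [← Finset.sum_add_distrib]
    exact Finset.sum_eq_zero fun π _ => hF _ _ _ _ _ _
  linarith

/-- The tail `V^{er}_s V^{st}_u V^{fu}_t` of `J`. -/
def jTail (V : Fin 3 → Fin 3 → Fin 3 → ℝ) (e f r : Fin 3) : ℝ :=
  ∑ s, ∑ t, ∑ u, V e r s * V s t u * V f u t

/-- The tail `V^{rs}_t V^{et}_u V^{fu}_s` of `L`. -/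
def lTail (V : Fin 3 → Fin 3 → Fin 3 → ℝ) (e f r : Fin 3) : ℝ :=
  ∑ s, ∑ t, ∑ u, V r s t * V e t u * V f u s

lemma covJ_eq (V : Fin 3 → Fin 3 → Fin 3 → ℝ) : covJ V = sym6 (fun a b c d e f =>
    ∑ p, ∑ q, ∑ r, V a b p * V c d q * V p q r * jTail V e f r) := by
  unfold covJ
  congr! 9
  simp only [jTail, Finset.mul_sum, mul_assoc]

lemma covL_eq (V : Fin 3 → Fin 3 → Fin 3 → ℝ) : covL V = sym6 (fun a b c d e f =>
    ∑ p, ∑ q, ∑ r, V a b p * V c d q * V p q r * lTail V e f r) := by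
  unfold covL
  congr! 9
  simp only [lTail, Finset.mul_sum, mul_assoc]

/-- The components of `V_R`, written out. -/
lemma VR_eq (R : Matrix (Fin 3) (Fin 3) ℝ) : VR R =
    ![![![0, -(2 * R 2 0), 2 * R 1 0],
        ![R 2 0, -R 2 1, R 1 1 - R 0 0],
        ![-R 1 0, R 0 0 - R 2 2, R 1 2]],
      ![![R 2 0, -R 2 1, R 1 1 - R 0 0],
        ![2 * R 2 1, 0, -(2 * R 0 1)],
        ![R 2 2 - R 1 1, R 0 1, -R 0 2]],
      ![![-R 1 0, R 0 0 - R 2 2, R 1 2],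
        ![R 2 2 - R 1 1, R 0 1, -R 0 2],
        ![-(2 * R 1 2), 2 * R 0 2, 0]]] := by
  funext a b c
  fin_cases a <;> fin_cases b <;> fin_cases c <;>
    simp [VR, eps, Fin.sum_univ_three] <;> ring_nf

set_option maxHeartbeats 2000000 in
/-- The cubic identity relating the two tails on metric-form tensors. -/
lemma jTail_VR (R : Matrix (Fin 3) (Fin 3) ℝ) (hR : ∀ i j, R i j = R j i) (e f r : Fin 3) :
    jTail (VR R) e f r + jTail (VR R) f e r =
      2 * (lTail (VR R) e f r + lTail (VR R) f e r) := by
  rw [VR_eq, hR 1 0, hR 2 0, hR 2 1]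
  fin_cases e <;> fin_cases f <;> fin_cases r <;>
    simp [jTail, lTail, Fin.sum_univ_three] <;> ring

/-- The tensor with `V^{00}_1 = V^{11}_0 = 1` and all other components zero. -/
def exampleV : Fin 3 → Fin 3 → Fin 3 → ℝ :=
  ![![![0, 1, 0], ![0, 0, 0], ![0, 0, 0]],
    ![![0, 0, 0], ![1, 0, 0], ![0, 0, 0]],
    ![![0, 0, 0], ![0, 0, 0], ![0, 0, 0]]]

lemma isWeyl_exampleV : IsWeyl exampleV := by
  constructor
  · intro a b c
    fin_cases a <;> fin_cases b <;> fin_cases c <;> simp [exampleV]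
  · intro b
    fin_cases b <;> simp [exampleV, Fin.sum_univ_three]

/-- On equal indices the symmetrisation does nothing. -/
lemma sym6_diag (F : Fin 3 → Fin 3 → Fin 3 → Fin 3 → Fin 3 → Fin 3 → ℝ) (a : Fin 3) :
    sym6 F a a a a a a = F a a a a a a := by
  have hv : ∀ i : Fin 6, ![a, a, a, a, a, a] i = a := by
    intro i
    fin_cases i <;> rfl
  simp only [sym6, hv, Finset.sum_const, Finset.card_univ, Fintype.card_perm, Fintype.card_fin]
  norm_num [Nat.factorial]
  ring

/-- (a) `J = 2L` on every metric-form tensor `V_R`;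
(b) there is a Weyl-type tensor for which `J ≠ 2L` at some indices. -/
theorem statement7 :
    (∀ R : Matrix (Fin 3) (Fin 3) ℝ, (∀ i j, R i j = R j i) →
      ∀ a b c d e f, covJ (VR R) a b c d e f = 2 * covL (VR R) a b c d e f) ∧
    (∃ V : Fin 3 → Fin 3 → Fin 3 → ℝ, IsWeyl V ∧
      ∃ a b c d e f, covJ V a b c d e f ≠ 2 * covL V a b c d e f) := by
  refine ⟨fun R hR a b c d e f => ?_, exampleV, isWeyl_exampleV, 0, 0, 0, 0, 0, 0, ?_⟩
  · have key := sym6_eq_zero (fun a b c d e f =>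
        (∑ p, ∑ q, ∑ r, VR R a b p * VR R c d q * VR R p q r * jTail (VR R) e f r)
        - 2 * ∑ p, ∑ q, ∑ r, VR R a b p * VR R c d q * VR R p q r * lTail (VR R) e f r)
      (fun a b c d e f => by
        simp only [Finset.mul_sum, ← Finset.sum_sub_distrib, ← Finset.sum_add_distrib]
        refine Finset.sum_eq_zero fun p _ => Finset.sum_eq_zero fun q _ =>
          Finset.sum_eq_zero fun r _ => ?_
        linear_combination (VR R a b p * VR R c d q * VR R p q r) * jTail_VR R hR e f r)
      a b c d e f
    rw [covJ_eq, covL_eq]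
    simp only [sym6, Finset.sum_sub_distrib] at key ⊢
    rw [← Finset.mul_sum] at key
    linear_combination key
  · rw [covJ_eq, covL_eq, sym6_diag, sym6_diag]
    simp [jTail, lTail, exampleV, Fin.sum_univ_three]
end
end

section
/- (a) For every symmetric matrix R : Matrix (Fin 3) (Fin 3) ℝ, the metric-form tensor V_R satisfies 3 * J V_R a b c d e f = 2 * Sym_{abcdef}(C V_R a b c * C V_R d e f) for all a, b, c, d, e, f. (b) There exists a Weyl-type tensor V and indices for which this equation fails. (Theorem 2, fourth obstruction: 3J^{abcdef} − 2C^{(abc}C^{def)} vanishes for metrisable projective structures but not in general.) -/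
/-!
A symmetric tensor is determined by the form obtained by contracting all its indices with one
vector `x` (`sym6_eq_of_form6_eq`, by polarisation), so (a) is an identity `3 J(x) = 2 C(x)²`
between polynomials in `x`; symmetrisations disappear on the way, and
`C(x) = V^{xx}_p A^{px}` and `J(x) = V^{xx}_p V^{xx}_q V^{pq}_r V^{xr}_s A^{sx}`
with `A^{pf} = V^{pt}_u V^{fu}_t`.

For a metric-form tensor, `V^{xx}_p = 2 w_p` with `w = x × Rx`. Put `δ = det(x, Rx, R²x) = w · R²x`.
* `A` is the matrix `-6 R² + 4 (tr R) R + (tr R² - (tr R)²)`, and `w` is orthogonal to `x` and `Rx`,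
  so `C(x) = 2 w · Ax = -12 δ` (`cubic_VR`).
* `J(x) = 8 (w × Rw)_r V^{xr}_s A^{sx}`, and `w × Rw = -δ x` (`cross_mulVec_cross`), so
  `J(x) = -8 δ C(x)` (`sextic_VR`).

Hence `3 J(x) = 288 δ² = 2 C(x)²`. For (b), a tensor with two nonzero entries suffices.
-/

noncomputable section

open Finset

/-- Polarisation: if the form `x ↦ F(x, …, x)` vanishes identically, so does the symmetrisation
of `F`. Substituting `x = ∑ m, t m • e_{v m}` gives a polynomial in `t` that vanishes identically, and
its coefficient at the squarefree monomial `∏ m, t m` is `∑ π, F (v ∘ π)`. -/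
theorem sum_perm_eq_zero_of_form_eq_zero {n : ℕ} {ι : Type*} [Fintype ι] [DecidableEq ι]
    (F : (Fin n → ι) → ℝ) (h : ∀ x : ι → ℝ, ∑ i, F i * ∏ k, x (i k) = 0) (v : Fin n → ι) :
    ∑ π : Equiv.Perm (Fin n), F (v ∘ π) = 0 := by
  have key : (∑ j : Fin n → Fin n,
      MvPolynomial.monomial (∑ k, Finsupp.single (j k) 1) (F (v ∘ j))) = 0 := by
    apply MvPolynomial.funext
    intro t
    have ht := h (fun a => ∑ m, if v m = a then t m else 0)
    simp only [Finset.prod_univ_sum, Fintype.piFinset_univ, Finset.mul_sum] at ht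
    rw [Finset.sum_comm] at ht
    rw [map_zero, map_sum, ← ht]
    refine Finset.sum_congr rfl fun j _ => ?_
    rw [Finset.sum_eq_single (v ∘ j)]
    · rw [MvPolynomial.eval_monomial, Finsupp.prod_fintype _ _ (by simp)]
      simp only [Finsupp.coe_finsetSum, Finset.sum_apply, ← Finset.prod_pow_eq_pow_sum,
        Function.comp_apply, if_true]
      rw [Finset.prod_comm]
      congr 1
      refine Finset.prod_congr rfl fun k _ => ?_
      rw [Finset.prod_eq_single (j k)] <;> simp +contextual 
    · intro i _ hi
      obtain ⟨k, hk⟩ := Function.ne_iff.mp hi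
      rw [Finset.prod_eq_zero (Finset.mem_univ k), mul_zero]
      exact if_neg fun h' => hk h'.symm
    · simp
  -- Only the bijections `j` contribute to the coefficient of the squarefree monomial.
  have hc := congrArg (MvPolynomial.coeff (∑ k, Finsupp.single k 1)) key
  rw [MvPolynomial.coeff_sum, MvPolynomial.coeff_zero] at hc
  rw [← hc]
  refine Finset.sum_of_injOn (fun π : Equiv.Perm (Fin n) => (π : Fin n → Fin n))
    (fun _ _ _ _ h' => DFunLike.coe_injective h') (by simp) ?_ ?_
  · intro j _ hj
    rw [MvPolynomial.coeff_monomial, if_neg]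
    intro he
    have hs : Function.Surjective j := by
      intro m
      by_contra! hm
      have := DFunLike.congr_fun he m
      simp [Finsupp.finsetSum_apply, Finsupp.single_apply, hm] at this
    exact hj ⟨Equiv.ofBijective j ⟨Finite.injective_iff_surjective.mpr hs, hs⟩, by simp, rfl⟩
  · intro π _
    rw [MvPolynomial.coeff_monomial, if_pos]
    exact Equiv.sum_comp π (fun k => Finsupp.single k (1 : ℕ))

theorem sum_fin_succ_fun {n : ℕ} {ι : Type*} [Fintype ι]
    (f : (Fin (n + 1) → ι) → ℝ) :
    ∑ j, f j = ∑ k, ∑ j : Fin n → ι, f (Fin.cons k j) := by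
  rw [← (Fin.consEquiv (fun _ => ι)).sum_comp, Fintype.sum_prod_type]
  rfl

/-- The value `F(x, x, x, x, x, x)` of a six-index array, all of whose indices are contracted with
the vector `x`. -/
def form6 (F : Fin 3 → Fin 3 → Fin 3 → Fin 3 → Fin 3 → Fin 3 → ℝ) (x : Fin 3 → ℝ) : ℝ :=
  ∑ a, x a * ∑ b, x b * ∑ c, x c * ∑ d, x d * ∑ e, x e * ∑ f, x f * F a b c d e f

/-- Symmetrised tensors agree as soon as the forms they define agree at every vector. -/
theorem sym6_eq_of_form6_eq (F G : Fin 3 → Fin 3 → Fin 3 → Fin 3 → Fin 3 → Fin 3 → ℝ)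
    (r s : ℝ) (h : ∀ x, r * form6 F x = s * form6 G x) (a b c d e f : Fin 3) :
    r * sym6 F a b c d e f = s * sym6 G a b c d e f := by
  have := sum_perm_eq_zero_of_form_eq_zero (n := 6) (ι := Fin 3)
    (fun i => r * F (i 0) (i 1) (i 2) (i 3) (i 4) (i 5)
      - s * G (i 0) (i 1) (i 2) (i 3) (i 4) (i 5)) (fun x => by
      have hx := sub_eq_zero.mpr (h x)
      rw [← hx]
      simp only [form6, Finset.mul_sum, ← Finset.sum_sub_distrib]
      iterate 6 rw [sum_fin_succ_fun]; refine Finset.sum_congr rfl fun _ _ => ?_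
      rw [Fintype.sum_unique]
      simp only [Fin.prod_univ_succ, Fin.cons_zero, Fin.cons_succ, Fin.cons_one,
        Fin.prod_univ_zero, show (2 : Fin 6) = Fin.succ (Fin.succ 0) from rfl,
        show (3 : Fin 6) = Fin.succ (Fin.succ (Fin.succ 0)) from rfl,
        show (4 : Fin 6) = Fin.succ (Fin.succ (Fin.succ (Fin.succ 0))) from rfl,
        show (5 : Fin 6) = Fin.succ (Fin.succ (Fin.succ (Fin.succ (Fin.succ 0)))) from rfl]
      ring)
    ![a, b, c, d, e, f]
  simp only [Finset.sum_sub_distrib, ← Finset.mul_sum, Function.comp_apply] at this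
  unfold sym6
  linear_combination (1 / 720) * this

theorem contract_sym3 (g : Fin 3 → Fin 3 → Fin 3 → ℝ) (x : Fin 3 → ℝ) :
    ∑ a, x a * ∑ b, x b * ∑ c, x c * sym3 g a b c =
      ∑ a, x a * ∑ b, x b * ∑ c, x c * g a b c := by
  have tuple : ∀ G : Fin 3 → Fin 3 → Fin 3 → ℝ,
      ∑ a, x a * ∑ b, x b * ∑ c, x c * G a b c =
        ∑ i : Fin 3 → Fin 3, (∏ k, x (i k)) * G (i 0) (i 1) (i 2) := by
    intro G
    simp only [Finset.mul_sum]
    iterate 3 rw [sum_fin_succ_fun]; refine Finset.sum_congr rfl fun _ _ => ?_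
    rw [Fintype.sum_unique]
    simp only [Fin.prod_univ_succ, Fin.cons_zero, Fin.cons_succ, Fin.cons_one,
      Fin.prod_univ_zero, show (2 : Fin 3) = Fin.succ (Fin.succ 0) from rfl]
    ring
  have perm : ∀ π : Equiv.Perm (Fin 3),
      ∑ i : Fin 3 → Fin 3, (∏ k, x (i k)) * g (i (π 0)) (i (π 1)) (i (π 2)) =
        ∑ i : Fin 3 → Fin 3, (∏ k, x (i k)) * g (i 0) (i 1) (i 2) := by
    intro π
    refine Fintype.sum_equiv (Equiv.arrowCongr π.symm (Equiv.refl _)) _ _ fun i => ?_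
    simp only [Equiv.arrowCongr_apply, Equiv.symm_symm, Equiv.coe_refl, Function.comp_apply, id]
    rw [Equiv.prod_comp π (fun k => x (i k))]
  have vec : ∀ i : Fin 3 → Fin 3, ![i 0, i 1, i 2] = i := by
    intro i
    ext k
    fin_cases k <;> rfl
  rw [tuple, tuple]
  simp only [sym3, vec, mul_left_comm _ (1 / 6 : ℝ), ← Finset.mul_sum]
  simp only [Finset.mul_sum]
  rw [Finset.sum_comm]
  simp only [← Finset.mul_sum, perm, Finset.sum_const, Finset.card_univ, Fintype.card_perm,
    Fintype.card_fin, Nat.factorial]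
  norm_num
  ring

/-- Moves a contraction with `x` past a factor `k p` that does not involve the contracted index. -/
theorem sum_mul_sum_mul (x k : Fin 3 → ℝ) (h : Fin 3 → Fin 3 → ℝ) :
    ∑ f, x f * ∑ p, k p * h p f = ∑ p, k p * ∑ f, x f * h p f := by
  simp only [Finset.mul_sum]
  rw [Finset.sum_comm]
  exact Finset.sum_congr rfl fun _ _ => Finset.sum_congr rfl fun _ _ => by ring

/-- The vector `A^{px} = V^{pt}{}_u V^{fu}{}_t x_f`. -/
def cA (V : Fin 3 → Fin 3 → Fin 3 → ℝ) (x : Fin 3 → ℝ) (p : Fin 3) : ℝ :=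
  ∑ f, x f * ∑ t, ∑ u, V p t u * V f u t

/-- The cubic form `C(x) = V^{xx}{}_p A^{px}` of `covC`. -/
def cubic (V : Fin 3 → Fin 3 → Fin 3 → ℝ) (x : Fin 3 → ℝ) : ℝ :=
  ∑ a, x a * ∑ b, x b * ∑ p, V a b p * cA V x p

/-- The sextic form `J(x) = V^{xx}{}_p V^{xx}{}_q V^{pq}{}_r V^{xr}{}_s A^{sx}` of `covJ`. -/
def sextic (V : Fin 3 → Fin 3 → Fin 3 → ℝ) (x : Fin 3 → ℝ) : ℝ :=
  ∑ a, x a * ∑ b, x b * ∑ p, V a b p * ∑ c, x c * ∑ d, x d * ∑ q, V c d q *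
    ∑ r, V p q r * ∑ e, x e * ∑ s, V e r s * cA V x s

theorem contract_covC (V : Fin 3 → Fin 3 → Fin 3 → ℝ) (x : Fin 3 → ℝ) :
    ∑ a, x a * ∑ b, x b * ∑ c, x c * covC V a b c = cubic V x := by
  simp only [covC, cubic]
  rw [contract_sym3]
  have hp := fun i j h => sum_mul_sum_mul x (V i j) h
  simp only [mul_assoc, ← Finset.mul_sum, hp, cA]

theorem form6_covC_mul (V : Fin 3 → Fin 3 → Fin 3 → ℝ) (x : Fin 3 → ℝ) :
    form6 (fun a b c d e f => covC V a b c * covC V d e f) x = cubic V x ^ 2 := by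
  rw [← contract_covC, form6, sq]
  simp only [Finset.sum_mul, Finset.mul_sum]
  iterate 6 refine Finset.sum_congr rfl fun _ _ => ?_
  ring

theorem form6_J (V : Fin 3 → Fin 3 → Fin 3 → ℝ) (x : Fin 3 → ℝ) :
    form6 (fun a b c d e f => ∑ p, ∑ q, ∑ r, ∑ s, ∑ t, ∑ u,
      V a b p * V c d q * V p q r * V e r s * V s t u * V f u t) x = sextic V x := by
  have hp := fun i j h => sum_mul_sum_mul x (V i j) h
  have hb : ∀ a b c d e f, ∑ p, ∑ q, ∑ r, ∑ s, ∑ t, ∑ u,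
      V a b p * V c d q * V p q r * V e r s * V s t u * V f u t =
      ∑ p, V a b p * ∑ q, V c d q * ∑ r, V p q r * ∑ s, V e r s * ∑ t, ∑ u, V s t u * V f u t := by
    intro a b c d e f
    simp only [Finset.mul_sum, mul_assoc]
  have hf : ∀ a b c d e, ∑ f, x f * ∑ p, V a b p * ∑ q, V c d q * ∑ r, V p q r * ∑ s, V e r s *
      ∑ t, ∑ u, V s t u * V f u t =
      ∑ p, V a b p * ∑ q, V c d q * ∑ r, V p q r * ∑ s, V e r s * cA V x s := by
    intro a b c d e
    simp only [hp, cA]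
  have he : ∀ a b c d, ∑ e, x e * ∑ p, V a b p * ∑ q, V c d q * ∑ r, V p q r * ∑ s, V e r s *
      cA V x s =
      ∑ p, V a b p * ∑ q, V c d q * ∑ r, V p q r * ∑ e, x e * ∑ s, V e r s * cA V x s := by
    intro a b c d
    simp only [hp]
  have hcd : ∀ a b, ∑ c, x c * ∑ d, x d * ∑ p, V a b p * ∑ q, V c d q * ∑ r, V p q r *
      ∑ e, x e * ∑ s, V e r s * cA V x s =
      ∑ p, V a b p * ∑ c, x c * ∑ d, x d * ∑ q, V c d q * ∑ r, V p q r *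
        ∑ e, x e * ∑ s, V e r s * cA V x s := by
    intro a b
    rw [← hp a b]
    refine Finset.sum_congr rfl fun c _ => ?_
    rw [← hp a b]
  simp only [form6, sextic, hb, hf, he, hcd]

theorem eps_ev (a b c : Fin 3) : eps a b c =
    ![![![0, 0, 0], ![0, 0, 1], ![0, -1, 0]], ![![0, 0, -1], ![0, 0, 0], ![1, 0, 0]],
      ![![0, 1, 0], ![-1, 0, 0], ![0, 0, 0]]] a b c := by
  fin_cases a <;> fin_cases b <;> fin_cases c <;> simp [eps]

open Matrix

section MetricForm

variable {R : Matrix (Fin 3) (Fin 3) ℝ}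

/-- For a metric-form tensor, `V^{xx}{}_p g^p = 2 det(x, Rx, g)`, for arbitrary vectors `x` and `g`. -/
theorem contract_VR (x g : Fin 3 → ℝ) :
    ∑ a, x a * ∑ b, x b * ∑ p, VR R a b p * g p = 2 * ((x ⨯₃ (R *ᵥ x)) ⬝ᵥ g) := by
  simp [VR, eps_ev, Fin.sum_univ_three, mulVec, dotProduct, cross_apply]
  ring

/-- Closed form `A = -6 R² + 4 (tr R) R + (tr R² - (tr R)²)`, applied to `x`. -/
theorem cA_VR (hR : R.IsSymm) (x : Fin 3 → ℝ) :
    cA (VR R) x = (-6 : ℝ) • (R *ᵥ (R *ᵥ x)) + (4 * R.trace) • (R *ᵥ x)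
      + ((R * R).trace - R.trace ^ 2) • x := by
  have h10 := hR.apply 0 1
  have h20 := hR.apply 0 2
  have h21 := hR.apply 1 2
  ext p
  fin_cases p <;>
  simp [cA, VR, eps_ev, Fin.sum_univ_three, h10, h20, h21, trace, mulVec, dotProduct,
    Matrix.mul_apply] <;>
  ring

/-- Only the `R²x` term of `A^{px}` survives the contraction with `x × Rx`. -/
theorem cubic_VR (hR : R.IsSymm) (x : Fin 3 → ℝ) :
    cubic (VR R) x = -12 * ((x ⨯₃ (R *ᵥ x)) ⬝ᵥ (R *ᵥ (R *ᵥ x))) := by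
  have hx : (x ⨯₃ (R *ᵥ x)) ⬝ᵥ x = 0 := by rw [dotProduct_comm, dot_self_cross]
  have hy : (x ⨯₃ (R *ᵥ x)) ⬝ᵥ (R *ᵥ x) = 0 := by rw [dotProduct_comm, dot_cross_self]
  rw [cubic, contract_VR, cA_VR hR, dotProduct_add, dotProduct_add, dotProduct_smul,
    dotProduct_smul, dotProduct_smul, hx, hy]
  simp only [smul_eq_mul]
  ring

/-- With `w = x × Rx`, the symmetry of `R` gives `x · Rw = Rx · w = 0`, so both `w` and `Rw` are
orthogonal to `x`, and `w × Rw = Rx (x · Rw) - x (Rx · Rw) = -det(x, Rx, R²x) x`. -/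
theorem cross_mulVec_cross (hR : R.IsSymm) (x : Fin 3 → ℝ) :
    (x ⨯₃ (R *ᵥ x)) ⨯₃ (R *ᵥ (x ⨯₃ (R *ᵥ x))) =
      -((x ⨯₃ (R *ᵥ x)) ⬝ᵥ (R *ᵥ (R *ᵥ x))) • x := by
  have h10 := hR.apply 0 1
  have h20 := hR.apply 0 2
  have h21 := hR.apply 1 2
  ext p
  fin_cases p <;>
  simp [Fin.sum_univ_three, h10, h20, h21, mulVec, dotProduct, cross_apply] <;>
  ring

/-- With `w = x × Rx`, three uses of `contract_VR` give `J(x) = 8 (w × Rw)_r V^{xr}{}_s A^{sx}`, and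
`w × Rw` is a multiple of `x`, so a copy of `C(x)` reappears. -/
theorem sextic_VR (hR : R.IsSymm) (x : Fin 3 → ℝ) :
    sextic (VR R) x = -8 * ((x ⨯₃ (R *ᵥ x)) ⬝ᵥ (R *ᵥ (R *ᵥ x))) * cubic (VR R) x := by
  set w := x ⨯₃ (R *ᵥ x) with hw
  have dot : ∀ u v : Fin 3 → ℝ, u ⬝ᵥ v = ∑ k, u k * v k := fun _ _ => rfl
  have hcross := cross_mulVec_cross hR x
  rw [← hw] at hcross
  have h : sextic (VR R) x = 4 * ∑ p, w p * ∑ q, w q * ∑ r, VR R p q r *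
      ∑ e, x e * ∑ s, VR R e r s * cA (VR R) x s := by
    simp only [sextic]
    rw [contract_VR, ← hw, dot, Finset.mul_sum, Finset.mul_sum]
    refine Finset.sum_congr rfl fun p _ => ?_
    rw [contract_VR, ← hw, dot]
    ring
  -- Renaming the two free slots uses the symmetry of `VR R` in its first two indices.
  have hc : x ⬝ᵥ (fun r => ∑ e, x e * ∑ s, VR R e r s * cA (VR R) x s) = cubic (VR R) x := by
    refine Finset.sum_congr rfl fun r _ => ?_
    have hV : ∀ e s, VR R e r s = VR R r e s := fun e s => by simp only [VR, add_comm]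
    simp only [hV]
  rw [h, contract_VR, hcross, smul_dotProduct, hc, smul_eq_mul]
  ring

end MetricForm

/-- (a) `3J = 2C^{(abc}C^{def)}` on every metric-form tensor `V_R`;
(b) there is a Weyl-type tensor for which this fails at some indices. -/
theorem statement8 :
    (∀ R : Matrix (Fin 3) (Fin 3) ℝ, (∀ i j, R i j = R j i) →
      ∀ a b c d e f, 3 * covJ (VR R) a b c d e f =
        2 * sym6 (fun a b c d e f => covC (VR R) a b c * covC (VR R) d e f) a b c d e f) ∧
    (∃ V : Fin 3 → Fin 3 → Fin 3 → ℝ, IsWeyl V ∧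
      ∃ a b c d e f, 3 * covJ V a b c d e f ≠
        2 * sym6 (fun a b c d e f => covC V a b c * covC V d e f) a b c d e f) := by
  refine ⟨fun R hR => sym6_eq_of_form6_eq _ _ 3 2 fun x => ?_, ?_⟩
  · have hsymm : R.IsSymm := Matrix.IsSymm.ext fun i j => hR j i
    rw [form6_J, form6_covC_mul, sextic_VR hsymm, cubic_VR hsymm]
    ring
  -- The tensor with `V^{00}_1 = V^{11}_0 = 1` and no other entries has `J = C = 1` at the indices `0`.
  · refine ⟨fun a b c => if a = 0 ∧ b = 0 ∧ c = 1 ∨ a = 1 ∧ b = 1 ∧ c = 0 then 1 else 0,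
      ⟨?_, ?_⟩, 0, 0, 0, 0, 0, 0, ?_⟩
    · intro a b c
      fin_cases a <;> fin_cases b <;> simp
    · intro b
      fin_cases b <;> simp
    · have h6 : ∀ i : Fin 6, ![(0 : Fin 3), 0, 0, 0, 0, 0] i = 0 := by decide
      have h3 : ∀ i : Fin 3, ![(0 : Fin 3), 0, 0] i = 0 := by decide
      simp only [covJ, covC, sym6, sym3, h6, h3, Finset.sum_const, Finset.card_univ,
        Fintype.card_perm, Fintype.card_fin]
      simp [Fin.sum_univ_three, Nat.factorial]
end
end

section
/- (a) For every symmetric matrix R : Matrix (Fin 3) (Fin 3) ℝ, the metric-form tensor V_R satisfies J V_R a b c d e f − 4 * K V_R a b c d e f + 4 * Sym_{abcdef}(A V_R a b * D V_R c d e f) = 0 for all a, b, c, d, e, f. (b) There exists a Weyl-type tensor V and indices for which this expression is nonzero. (Theorem 2, fifth obstruction: J^{abcdef} − 4K^{abcdef} + 4A^{(ab}D^{cdef)} vanishes for metrisable projective structures but not in general.) -/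
/-! The obstruction is the symmetrisation of a multilinear form in six covectors
(`expression_eq`), so by polarisation (`polarisation`) it vanishes as soon as that form vanishes
on the diagonal. In terms of the product `u ∘ v = V(u, v)`, its multiplication operators `N_u`, and
`w = x ∘ x`, the diagonal value is
`tr (N_{x ∘ (w ∘ w)} N_x) - 4 tr (N_{x ∘ w}²) + 4 tr (N_x²) tr (N_w N_x²)`.

For a metric-form tensor, `u ∘ v = u × Rv + v × Ru`, and `R` may be taken trace-free because adding
a multiple of the identity does not change the product. Put `y = Rx`, `z = R²x`, let `s` be the
second invariant of `R`, and let `Δ = x · (y × z)`. Then `w = 2 x × y`, `w ∘ w = -8 Δ x`,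
`x ∘ w = 2 ((x·x) z + (x·y) y - 2 (y·y) x)` and `tr (N_u N_v) = -6 Ru·Rv - 2 s u·v`. Since `Δ²` is a
Gram determinant, Cayley–Hamilton turns every term into a polynomial in `x·x`, `x·y`, `y·y`, `s` and
`det R`, and these polynomials cancel (`obstruction_diag_traceFree`).

For non-vanishing, the tensor with `V^{00}{}_1 = V^{11}{}_0 = 1` and all other components zero has
value `1` at the indices `000000`. -/

noncomputable section

open Finset

/-! ### Polarisation -/

/-- A multilinear form vanishing on the diagonal has vanishing symmetrisation. By
inclusion–exclusion, the sum of `F (v ∘ σ)` over the surjective `σ` is an alternating sum of the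
values of `F` on the diagonal at the partial sums of `v`. -/
theorem polarisation_s9 {E : Type*} [AddCommGroup E] [Module ℝ E] {n : ℕ}
    (F : MultilinearMap ℝ (fun _ : Fin n => E) ℝ) (hF : ∀ x, F (fun _ => x) = 0)
    (v : Fin n → E) : ∑ π : Equiv.Perm (Fin n), F (fun i => v (π i)) = 0 := by
  have h := Finset.inclusion_exclusion_sum_inf_compl (Finset.univ : Finset (Fin n))
    (fun i => (Finset.univ.filter fun σ : Fin n → Fin n => ∀ k, σ k ≠ i))
    (fun σ => F (fun k => v (σ k)))
  have hR : ∀ t : Finset (Fin n),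
      ∑ σ ∈ t.inf (fun i => (Finset.univ.filter fun σ : Fin n → Fin n => ∀ k, σ k ≠ i)),
        F (fun k => v (σ k)) = 0 := by
    intro t
    have ht : t.inf (fun i => (Finset.univ.filter fun σ : Fin n → Fin n => ∀ k, σ k ≠ i))
        = Fintype.piFinset (fun _ => tᶜ) := by
      ext σ
      simp only [Finset.mem_inf, Finset.mem_filter, Finset.mem_univ, true_and,
        Fintype.mem_piFinset, Finset.mem_compl]
      exact ⟨fun h k hk => h _ hk k rfl, fun h i hi k hk => h k (hk ▸ hi)⟩
    rw [ht, ← MultilinearMap.map_sum_finset F (fun _ i => v i) (fun _ => tᶜ)]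
    exact hF _
  simp only [hR, smul_zero, Finset.sum_const_zero] at h
  rw [← h]
  refine Finset.sum_bij (fun π _ => (π : Fin n → Fin n)) ?_ ?_ ?_ ?_
  · intro π _
    simp only [Finset.mem_inf, Finset.mem_compl, Finset.mem_filter, Finset.mem_univ, true_and]
    intro i _ hi
    exact hi (π.symm i) (π.apply_symm_apply i)
  · intro π _ π' _ hπ
    exact DFunLike.coe_injective hπ
  · intro σ hσ
    simp only [Finset.mem_inf, Finset.mem_compl, Finset.mem_filter, Finset.mem_univ, true_and,
      not_forall, not_not, forall_const] at hσ
    exact ⟨Equiv.ofBijective σ (Finite.surjective_iff_bijective.mp hσ), Finset.mem_univ _, rfl⟩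
  · intro π _
    rfl

/-- The inner symmetrisation in `g^{(ab} h^{(cdef))}` is redundant. -/
theorem sym6_mul_sym4 (g : Fin 3 → Fin 3 → ℝ) (h : Fin 3 → Fin 3 → Fin 3 → Fin 3 → ℝ)
    (a b c d e f : Fin 3) :
    sym6 (fun a b c d e f => g a b * sym4 h c d e f) a b c d e f
      = sym6 (fun a b c d e f => g a b * h c d e f) a b c d e f := by
  unfold sym6 sym4
  generalize ![a, b, c, d, e, f] = s
  have hvec : ∀ (π : Equiv.Perm (Fin 6)) (j : Fin 4),
      ![s (π 2), s (π 3), s (π 4), s (π 5)] j = s (π (Fin.natAdd 2 j)) := by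
    intro π j
    fin_cases j <;> rfl
  -- a permutation of the last four of six positions
  let ex : Equiv.Perm (Fin 4) → Equiv.Perm (Fin 6) := fun σ =>
    (finSumFinEquiv (m := 2) (n := 4)).permCongr (Equiv.sumCongr (Equiv.refl _) σ)
  have ex0 : ∀ σ, ex σ 0 = 0 := fun σ => rfl
  have ex1 : ∀ σ, ex σ 1 = 1 := fun σ => rfl
  have ex2 : ∀ σ j, ex σ (Fin.natAdd 2 j) = Fin.natAdd 2 (σ j) := by
    intro σ j
    fin_cases j <;> rfl
  have key : ∀ σ : Equiv.Perm (Fin 4),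
      ∑ π : Equiv.Perm (Fin 6), g (s (π 0)) (s (π 1)) *
        h (s (π (Fin.natAdd 2 (σ 0)))) (s (π (Fin.natAdd 2 (σ 1))))
          (s (π (Fin.natAdd 2 (σ 2)))) (s (π (Fin.natAdd 2 (σ 3))))
      = ∑ π : Equiv.Perm (Fin 6), g (s (π 0)) (s (π 1)) *
        h (s (π 2)) (s (π 3)) (s (π 4)) (s (π 5)) := by
    intro σ
    refine Fintype.sum_equiv (Equiv.mulRight (ex σ)) _ _ fun π => ?_
    simp only [Equiv.coe_mulRight, Equiv.Perm.mul_apply, ex0, ex1, ← ex2]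
    rfl
  simp only [hvec, Finset.mul_sum, mul_left_comm _ (1 / 24 : ℝ)]
  rw [Finset.sum_comm]
  simp only [← Finset.mul_sum, key]
  simp [Finset.card_univ, Fintype.card_perm, Nat.factorial]
  ring

/-! ### The algebra defined by a tensor -/

/-- The bilinear product `u ∘ v` with components `V^{ab}{}_c u_a v_b`. -/
def prd (V : Fin 3 → Fin 3 → Fin 3 → ℝ) (u v : Fin 3 → ℝ) (c : Fin 3) : ℝ :=
  ∑ a, ∑ b, V a b c * u a * v b

/-- The matrix `(N_u)^b{}_c = V^{ab}{}_c u_a` of multiplication by `u`. -/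
def opN (V : Fin 3 → Fin 3 → Fin 3 → ℝ) (u : Fin 3 → ℝ) (b c : Fin 3) : ℝ :=
  ∑ a, V a b c * u a

/-- The trace form `tr (N_u N_v)`. -/
def trA (V : Fin 3 → Fin 3 → Fin 3 → ℝ) (u v : Fin 3 → ℝ) : ℝ :=
  ∑ p, ∑ q, opN V u p q * opN V v q p

/-- The cubic trace form `tr (N_u N_v N_w)`. -/
def trD (V : Fin 3 → Fin 3 → Fin 3 → ℝ) (u v w : Fin 3 → ℝ) : ℝ :=
  ∑ q, ∑ r, ∑ s, opN V u q r * opN V v r s * opN V w s q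

section Linearity

variable (V : Fin 3 → Fin 3 → Fin 3 → ℝ) (u u' v w : Fin 3 → ℝ) (k : ℝ)

theorem prd_add_left : prd V (u + u') v = prd V u v + prd V u' v := by
  ext c; simp [prd, mul_add, add_mul, Finset.sum_add_distrib]

theorem prd_add_right : prd V v (u + u') = prd V v u + prd V v u' := by
  ext c; simp [prd, mul_add, Finset.sum_add_distrib]

theorem prd_smul_left : prd V (k • u) v = k • prd V u v := by
  ext c; simp [prd, Finset.mul_sum, mul_comm, mul_left_comm]

theorem prd_smul_right : prd V v (k • u) = k • prd V v u := by
  ext c; simp [prd, Finset.mul_sum, mul_left_comm]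

theorem opN_add : opN V (u + u') = opN V u + opN V u' := by
  ext b c; simp [opN, mul_add, Finset.sum_add_distrib]

theorem opN_smul : opN V (k • u) = k • opN V u := by
  ext b c; simp [opN, Finset.mul_sum, mul_left_comm]

theorem trA_add_left : trA V (u + u') v = trA V u v + trA V u' v := by
  simp [trA, opN_add, add_mul, Finset.sum_add_distrib]

theorem trA_add_right : trA V v (u + u') = trA V v u + trA V v u' := by
  simp [trA, opN_add, mul_add, Finset.sum_add_distrib]

theorem trA_smul_left : trA V (k • u) v = k * trA V u v := by
  simp [trA, opN_smul, Finset.mul_sum, mul_assoc]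

theorem trA_smul_right : trA V v (k • u) = k * trA V v u := by
  simp [trA, opN_smul, Finset.mul_sum, mul_left_comm]

theorem trD_add₁ : trD V (u + u') v w = trD V u v w + trD V u' v w := by
  simp [trD, opN_add, add_mul, Finset.sum_add_distrib]

theorem trD_add₂ : trD V v (u + u') w = trD V v u w + trD V v u' w := by
  simp [trD, opN_add, add_mul, mul_add, Finset.sum_add_distrib]

theorem trD_add₃ : trD V v w (u + u') = trD V v w u + trD V v w u' := by
  simp [trD, opN_add, mul_add, Finset.sum_add_distrib]

theorem trD_smul₁ : trD V (k • u) v w = k * trD V u v w := by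
  simp [trD, opN_smul, Finset.mul_sum, mul_assoc]

theorem trD_smul₂ : trD V v (k • u) w = k * trD V v u w := by
  simp [trD, opN_smul, Finset.mul_sum, mul_assoc, mul_left_comm]

theorem trD_smul₃ : trD V v w (k • u) = k * trD V v w u := by
  simp [trD, opN_smul, Finset.mul_sum, mul_left_comm]

end Linearity

/-- The obstruction before symmetrisation, as a multilinear form in six covectors. -/
def obstruction (V : Fin 3 → Fin 3 → Fin 3 → ℝ) :
    MultilinearMap ℝ (fun _ : Fin 6 => Fin 3 → ℝ) ℝ where
  toFun v :=
    trA V (prd V (v 4) (prd V (prd V (v 0) (v 1)) (prd V (v 2) (v 3)))) (v 5)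
      - 4 * trA V (prd V (v 4) (prd V (v 0) (v 1))) (prd V (v 5) (prd V (v 2) (v 3)))
      + 4 * (trA V (v 0) (v 1) * trD V (prd V (v 2) (v 3)) (v 4) (v 5))
  map_update_add' {inst} v i x y := by
    -- `Function.update` comes with an arbitrary decidability instance; `simp` needs the usual one
    obtain rfl : inst = instDecidableEqFin 6 := Subsingleton.elim _ _
    fin_cases i <;>
    simp [prd_add_left, prd_add_right, trA_add_left, trA_add_right,
      trD_add₁, trD_add₂, trD_add₃] <;> ring
  map_update_smul' {inst} v i k x := by
    obtain rfl : inst = instDecidableEqFin 6 := Subsingleton.elim _ _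
    fin_cases i <;>
    simp [prd_smul_left, prd_smul_right, trA_smul_left, trA_smul_right,
      trD_smul₁, trD_smul₂, trD_smul₃] <;> ring

theorem obstruction_apply (V : Fin 3 → Fin 3 → Fin 3 → ℝ) (v : Fin 6 → Fin 3 → ℝ) :
    obstruction V v =
    trA V (prd V (v 4) (prd V (prd V (v 0) (v 1)) (prd V (v 2) (v 3)))) (v 5)
      - 4 * trA V (prd V (v 4) (prd V (v 0) (v 1))) (prd V (v 5) (prd V (v 2) (v 3)))
      + 4 * (trA V (v 0) (v 1) * trD V (prd V (v 2) (v 3)) (v 4) (v 5)) := rfl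

/-! ### Components -/

section Components

variable (V : Fin 3 → Fin 3 → Fin 3 → ℝ) (a b c d e f : Fin 3)

theorem prd_single (u : Fin 3 → ℝ) :
    prd V (Pi.single a 1) u = fun c => ∑ b, V a b c * u b := by
  ext c
  simp [prd, Pi.single_apply]

theorem prd_single_single : prd V (Pi.single a 1) (Pi.single b 1) = V a b := by
  ext c
  simp [prd_single, Pi.single_apply]

theorem opN_single : opN V (Pi.single a 1) = V a := by
  ext b c
  simp [opN, Pi.single_apply]

theorem sum_comm_four (g : Fin 3 → Fin 3 → Fin 3 → Fin 3 → Fin 3 → ℝ) :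
    ∑ t, ∑ p, ∑ q, ∑ r, ∑ s, g t p q r s = ∑ p, ∑ q, ∑ r, ∑ s, ∑ t, g t p q r s := by
  rw [Finset.sum_comm]
  refine Finset.sum_congr rfl fun p _ => ?_
  rw [Finset.sum_comm]
  refine Finset.sum_congr rfl fun q _ => ?_
  rw [Finset.sum_comm]
  exact Finset.sum_congr rfl fun r _ => Finset.sum_comm

theorem sum_comm_three (g : Fin 3 → Fin 3 → Fin 3 → Fin 3 → ℝ) :
    ∑ t, ∑ p, ∑ q, ∑ r, g t p q r = ∑ p, ∑ q, ∑ r, ∑ t, g t p q r := by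
  rw [Finset.sum_comm]
  refine Finset.sum_congr rfl fun p _ => ?_
  rw [Finset.sum_comm]
  exact Finset.sum_congr rfl fun q _ => Finset.sum_comm

theorem sum_comm_two (g : Fin 3 → Fin 3 → Fin 3 → ℝ) :
    ∑ t, ∑ p, ∑ q, g t p q = ∑ p, ∑ q, ∑ t, g t p q := by
  rw [Finset.sum_comm]
  exact Finset.sum_congr rfl fun p _ => Finset.sum_comm

theorem sum_comm_tu (g : Fin 3 → Fin 3 → Fin 3 → Fin 3 → Fin 3 → Fin 3 → ℝ) :
    ∑ t, ∑ u, ∑ p, ∑ q, ∑ r, ∑ s, g p q r s t u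
      = ∑ p, ∑ q, ∑ r, ∑ s, ∑ t, ∑ u, g p q r s t u := by
  rw [← sum_comm_four fun t p q r s => ∑ u, g p q r s t u]
  exact Finset.sum_congr rfl fun t _ => sum_comm_four fun u p q r s => g p q r s t u

theorem covA_eq : covA V a b = trA V (Pi.single a 1) (Pi.single b 1) := by
  simp only [covA, trA, opN_single]

theorem covD_integrand :
    ∑ p, ∑ q, ∑ r, ∑ s, V a b p * V p q r * V c r s * V d s q
      = trD V (prd V (Pi.single a 1) (Pi.single b 1)) (Pi.single c 1) (Pi.single d 1) := by
  simp only [trD, prd_single_single, opN_single]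
  simp only [opN, Finset.sum_mul]
  rw [sum_comm_three]
  simp only [mul_comm (V a b _)]

theorem covJ_integrand :
    ∑ p, ∑ q, ∑ r, ∑ s, ∑ t, ∑ u,
      V a b p * V c d q * V p q r * V e r s * V s t u * V f u t
      = trA V (prd V (Pi.single e 1) (prd V (prd V (Pi.single a 1) (Pi.single b 1))
          (prd V (Pi.single c 1) (Pi.single d 1)))) (Pi.single f 1) := by
  simp only [trA, prd_single_single, opN_single, prd_single V e]
  simp only [opN, prd, Finset.sum_mul, Finset.mul_sum]
  rw [← sum_comm_tu]
  refine Finset.sum_congr rfl fun t _ => Finset.sum_congr rfl fun u _ => ?_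
  symm
  rw [sum_comm_three, sum_comm_two]
  refine Finset.sum_congr rfl fun p _ => Finset.sum_congr rfl fun q _ =>
    Finset.sum_congr rfl fun r _ => Finset.sum_congr rfl fun s _ => ?_
  ring

theorem covK_integrand :
    ∑ p, ∑ q, ∑ r, ∑ s, ∑ t, ∑ u,
      V a b p * V c d q * V e p r * V f q s * V r t u * V s u t
      = trA V (prd V (Pi.single e 1) (prd V (Pi.single a 1) (Pi.single b 1)))
          (prd V (Pi.single f 1) (prd V (Pi.single c 1) (Pi.single d 1))) := by
  simp only [trA, prd_single_single]
  simp only [prd_single, opN, Finset.sum_mul, Finset.mul_sum]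
  rw [← sum_comm_tu]
  refine Finset.sum_congr rfl fun t _ => Finset.sum_congr rfl fun u _ => ?_
  rw [sum_comm_three, ← sum_comm_two]
  refine Finset.sum_congr rfl fun p _ => Finset.sum_congr rfl fun q _ =>
    Finset.sum_congr rfl fun r _ => Finset.sum_congr rfl fun s _ => ?_
  ring

/-- The obstruction tensor is the symmetrisation of the components of `obstruction V`. -/
theorem expression_eq :
    covJ V a b c d e f - 4 * covK V a b c d e f
        + 4 * sym6 (fun a b c d e f => covA V a b * covD V c d e f) a b c d e f
      = (1 / 720) * ∑ π : Equiv.Perm (Fin 6),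
          obstruction V (fun i => Pi.single (![a, b, c, d, e, f] (π i)) 1) := by
  unfold covD
  rw [sym6_mul_sym4]
  simp only [covJ, covK, sym6, covJ_integrand, covK_integrand, covD_integrand, covA_eq,
    obstruction_apply, Finset.sum_add_distrib, Finset.sum_sub_distrib, ← Finset.mul_sum]
  ring

end Components

/-! ### Metric-form tensors -/

open Matrix

/-- On metric-form tensors the product is `u × Rv + v × Ru`. -/
theorem prd_VR (R : Matrix (Fin 3) (Fin 3) ℝ) (u v : Fin 3 → ℝ) :
    prd (VR R) u v = u ⨯₃ (R *ᵥ v) + v ⨯₃ (R *ᵥ u) := by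
  ext i
  fin_cases i <;>
  simp [prd, VR, eps, Fin.sum_univ_three, cross_apply, mulVec, dotProduct] <;> ring

/-- Adding a multiple of the identity to `R` does not change `VR R`, so that `R` may be taken
trace-free. -/
theorem VR_sub_smul_one (R : Matrix (Fin 3) (Fin 3) ℝ) (k : ℝ) :
    VR (R - k • 1) = VR R := by
  ext a b c
  fin_cases a <;> fin_cases b <;> fin_cases c <;>
  simp [VR, eps, Fin.sum_univ_three] <;> ring

/-- The second elementary symmetric function of the eigenvalues of a symmetric matrix. -/
def sec (R : Matrix (Fin 3) (Fin 3) ℝ) : ℝ :=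
  R 0 0 * R 1 1 + R 0 0 * R 2 2 + R 1 1 * R 2 2 - R 0 1 ^ 2 - R 0 2 ^ 2 - R 1 2 ^ 2

section TraceFree

variable {R : Matrix (Fin 3) (Fin 3) ℝ}

/-- Cayley–Hamilton for trace-free symmetric `R`. -/
theorem cayley_hamilton (hs : ∀ i j, R i j = R j i) (ht : R 2 2 = - R 0 0 - R 1 1)
    (x : Fin 3 → ℝ) :
    R *ᵥ (R *ᵥ (R *ᵥ x)) = R.det • x - sec R • (R *ᵥ x) := by
  ext i
  fin_cases i <;>
  simp [sec, det_fin_three, Fin.sum_univ_three, mulVec, dotProduct, ht,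
    hs 1 0, hs 2 0, hs 2 1] <;> ring

theorem trA_VR (hs : ∀ i j, R i j = R j i) (ht : R 2 2 = - R 0 0 - R 1 1)
    (u v : Fin 3 → ℝ) :
    trA (VR R) u v = -6 * (R *ᵥ u ⬝ᵥ R *ᵥ v) - 2 * sec R * (u ⬝ᵥ v) := by
  simp [trA, opN, VR, eps, sec, Fin.sum_univ_three, mulVec, dotProduct, ht,
    hs 1 0, hs 2 0, hs 2 1]
  ring

theorem trD_VR (hs : ∀ i j, R i j = R j i) (ht : R 2 2 = - R 0 0 - R 1 1)
    (x : Fin 3 → ℝ) :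
    trD (VR R) (x ⨯₃ (R *ᵥ x)) x x = 6 * (R *ᵥ x ⬝ᵥ R *ᵥ x) ^ 2
      + 4 * sec R * (x ⬝ᵥ x) * (R *ᵥ x ⬝ᵥ R *ᵥ x) + 2 * sec R * (x ⬝ᵥ R *ᵥ x) ^ 2
      - 6 * R.det * (x ⬝ᵥ x) * (x ⬝ᵥ R *ᵥ x) := by
  simp [trD, opN, VR, eps, sec, Fin.sum_univ_three, mulVec, dotProduct, ht,
    hs 1 0, hs 2 0, hs 2 1, cross_apply, det_fin_three]
  ring

/-- The derivation property `R(u × v) = tr R • u × v - Ru × v - u × Rv` at `u = x`, `v = Rx`. -/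
theorem mulVec_cross (hs : ∀ i j, R i j = R j i) (ht : R 2 2 = - R 0 0 - R 1 1)
    (x : Fin 3 → ℝ) :
    R *ᵥ (x ⨯₃ (R *ᵥ x)) = -(x ⨯₃ (R *ᵥ (R *ᵥ x))) := by
  ext i
  fin_cases i <;>
  simp [-mulVec_mulVec, Fin.sum_univ_three, mulVec, dotProduct, ht, cross_apply,
    hs 1 0, hs 2 0, hs 2 1] <;> ring

theorem dot_mulVec_symm (hs : ∀ i j, R i j = R j i) (u v : Fin 3 → ℝ) :
    R *ᵥ u ⬝ᵥ v = u ⬝ᵥ R *ᵥ v := by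
  simp [Fin.sum_univ_three, mulVec, dotProduct, hs 1 0, hs 2 0, hs 2 1]
  ring

end TraceFree

theorem cross_cross_cross (x y z : Fin 3 → ℝ) :
    (x ⨯₃ y) ⨯₃ (-(x ⨯₃ z)) = -(x ⬝ᵥ y ⨯₃ z) • x := by
  ext i
  fin_cases i <;> simp [cross_apply, dotProduct, Fin.sum_univ_three] <;> ring

theorem cross_triple_sum (x y z : Fin 3 → ℝ) :
    x ⨯₃ (-(x ⨯₃ z)) + (x ⨯₃ y) ⨯₃ y
      = (x ⬝ᵥ x) • z + (x ⬝ᵥ y) • y - (x ⬝ᵥ z + y ⬝ᵥ y) • x := by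
  ext i
  fin_cases i <;> simp [cross_apply, dotProduct, Fin.sum_univ_three] <;> ring

/-- The square of a triple product is the Gram determinant. -/
theorem triple_sq (x y z : Fin 3 → ℝ) :
    (x ⬝ᵥ y ⨯₃ z) ^ 2 = (x ⬝ᵥ x) * (y ⬝ᵥ y) * (z ⬝ᵥ z)
      + 2 * (x ⬝ᵥ y) * (x ⬝ᵥ z) * (y ⬝ᵥ z) - (x ⬝ᵥ x) * (y ⬝ᵥ z) ^ 2
      - (y ⬝ᵥ y) * (x ⬝ᵥ z) ^ 2 - (z ⬝ᵥ z) * (x ⬝ᵥ y) ^ 2 := by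
  simp [cross_apply, dotProduct, Fin.sum_univ_three]
  ring

theorem dot_self_comb (x y z : Fin 3 → ℝ) (α β γ : ℝ) :
    (α • x + β • y + γ • z) ⬝ᵥ (α • x + β • y + γ • z)
      = α ^ 2 * (x ⬝ᵥ x) + β ^ 2 * (y ⬝ᵥ y) + γ ^ 2 * (z ⬝ᵥ z)
        + 2 * α * β * (x ⬝ᵥ y) + 2 * α * γ * (x ⬝ᵥ z) + 2 * β * γ * (y ⬝ᵥ z) := by
  simp [dotProduct, Fin.sum_univ_three]
  ring

/-- With `y = Rx`, `z = R²x` and `Δ = x · (y × z)`, the three terms of the obstruction on the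
diagonal are `96 Δ²`, `4 tr (N_h N_h)` with `h = (x·x) z + (x·y) y - 2 (y·y) x`, and
`tr (N_x N_x) tr (N_w N_x N_x)`. The Gram determinant `Δ²` and Cayley–Hamilton turn all of them
into polynomials in `x·x`, `x·y`, `y·y` and the invariants of `R`, which cancel. -/
theorem obstruction_diag_traceFree {R : Matrix (Fin 3) (Fin 3) ℝ}
    (hs : ∀ i j, R i j = R j i) (ht : R 2 2 = - R 0 0 - R 1 1) (x : Fin 3 → ℝ) :
    obstruction (VR R) (fun _ => x) = 0 := by
  rw [obstruction_apply]
  have hc := cayley_hamilton hs ht x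
  have hn := mulVec_cross hs ht x
  have hD := trD_VR hs ht x
  have hxz : x ⬝ᵥ R *ᵥ (R *ᵥ x) = R *ᵥ x ⬝ᵥ R *ᵥ x := (dot_mulVec_symm hs _ _).symm
  have hyz : R *ᵥ x ⬝ᵥ R *ᵥ (R *ᵥ x) = R.det * (x ⬝ᵥ x) - sec R * (x ⬝ᵥ R *ᵥ x) := by
    rw [dot_mulVec_symm hs, hc]
    simp
  have hzz : R *ᵥ (R *ᵥ x) ⬝ᵥ R *ᵥ (R *ᵥ x)
      = R.det * (x ⬝ᵥ R *ᵥ x) - sec R * (R *ᵥ x ⬝ᵥ R *ᵥ x) := by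
    rw [dot_mulVec_symm hs, hc]
    simp [dotProduct_comm]
  have hw : prd (VR R) x x = (2 : ℝ) • (x ⨯₃ (R *ᵥ x)) := by
    rw [prd_VR, two_smul]
  have hnn : prd (VR R) (x ⨯₃ (R *ᵥ x)) (x ⨯₃ (R *ᵥ x))
      = (-2 * (x ⬝ᵥ (R *ᵥ x) ⨯₃ (R *ᵥ (R *ᵥ x)))) • x := by
    rw [prd_VR, hn, cross_cross_cross, ← two_smul ℝ, smul_smul]
    congr 1
    ring
  have hxn : prd (VR R) x (x ⨯₃ (R *ᵥ x)) = (-2 * (R *ᵥ x ⬝ᵥ R *ᵥ x)) • x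
      + (x ⬝ᵥ R *ᵥ x) • (R *ᵥ x) + (x ⬝ᵥ x) • (R *ᵥ (R *ᵥ x)) := by
    rw [prd_VR, hn, cross_triple_sum, hxz]
    module
  have hJ : trA (VR R) (x ⨯₃ (R *ᵥ x)) x = -6 * (x ⬝ᵥ (R *ᵥ x) ⨯₃ (R *ᵥ (R *ᵥ x))) := by
    rw [trA_VR hs ht, hn]
    simp [cross_apply, dotProduct, Fin.sum_univ_three]
    ring
  have hRh : R *ᵥ ((-2 * (R *ᵥ x ⬝ᵥ R *ᵥ x)) • x
      + (x ⬝ᵥ R *ᵥ x) • (R *ᵥ x) + (x ⬝ᵥ x) • (R *ᵥ (R *ᵥ x)))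
      = ((x ⬝ᵥ x) * R.det) • x + (-2 * (R *ᵥ x ⬝ᵥ R *ᵥ x) - (x ⬝ᵥ x) * sec R) • (R *ᵥ x)
        + (x ⬝ᵥ R *ᵥ x) • (R *ᵥ (R *ᵥ x)) := by
    simp only [mulVec_add, mulVec_smul, hc]
    module
  have hΔ := triple_sq x (R *ᵥ x) (R *ᵥ (R *ᵥ x))
  simp only [hw, prd_smul_left, prd_smul_right, hnn, hxn, trA_smul_left, trA_smul_right, hJ,
    trD_smul₁, hD, smul_smul]
  rw [trA_VR hs ht _ ((-2 * (R *ᵥ x ⬝ᵥ R *ᵥ x)) • x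
      + (x ⬝ᵥ R *ᵥ x) • (R *ᵥ x) + (x ⬝ᵥ x) • (R *ᵥ (R *ᵥ x))), hRh, dot_self_comb,
    dot_self_comb, trA_VR hs ht x x]
  rw [hxz, hyz, hzz] at hΔ ⊢
  linear_combination 96 * hΔ

theorem obstruction_diag (R : Matrix (Fin 3) (Fin 3) ℝ) (hs : ∀ i j, R i j = R j i)
    (x : Fin 3 → ℝ) : obstruction (VR R) (fun _ => x) = 0 := by
  rw [← VR_sub_smul_one R ((R 0 0 + R 1 1 + R 2 2) / 3)]
  refine obstruction_diag_traceFree (fun i j => ?_) ?_ x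
  · simp [hs i j, one_apply, eq_comm]
  · simp
    ring

/-! ### A tensor that is not of metric form -/

/-- The tensor whose only nonzero components are `V^{00}{}_1 = V^{11}{}_0 = 1`. -/
def Vex (a b c : Fin 3) : ℝ :=
  if (a, b, c) = (0, 0, 1) ∨ (a, b, c) = (1, 1, 0) then 1 else 0

theorem isWeyl_Vex : IsWeyl Vex := by
  constructor
  · intro a b c
    fin_cases a <;> fin_cases b <;> fin_cases c <;> simp [Vex]
  · intro b
    fin_cases b <;> simp [Vex]

theorem obstruction_Vex : obstruction Vex (fun _ => Pi.single 0 1) = 1 := by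
  have h00 : prd Vex (Pi.single 0 1) (Pi.single 0 1) = Pi.single 1 1 := by
    rw [prd_single_single]
    ext c
    fin_cases c <;> simp [Vex]
  have h01 : prd Vex (Pi.single 0 1) (Pi.single 1 1) = 0 := by
    rw [prd_single_single]
    ext c
    fin_cases c <;> simp [Vex]
  have h11 : prd Vex (Pi.single 1 1) (Pi.single 1 1) = Pi.single 0 1 := by
    rw [prd_single_single]
    ext c
    fin_cases c <;> simp [Vex]
  rw [obstruction_apply, h00, h11, h01, h00]
  simp [trA, trD, opN, Vex, Fin.sum_univ_three]

/-- (a) `J − 4K + 4A^{(ab}D^{cdef)} = 0` on every metric-form tensor `V_R`;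
(b) there is a Weyl-type tensor for which this expression is nonzero at some indices. -/
theorem statement9 :
    (∀ R : Matrix (Fin 3) (Fin 3) ℝ, (∀ i j, R i j = R j i) →
      ∀ a b c d e f, covJ (VR R) a b c d e f - 4 * covK (VR R) a b c d e f
        + 4 * sym6 (fun a b c d e f => covA (VR R) a b * covD (VR R) c d e f) a b c d e f
        = 0) ∧
    (∃ V : Fin 3 → Fin 3 → Fin 3 → ℝ, IsWeyl V ∧
      ∃ a b c d e f, covJ V a b c d e f - 4 * covK V a b c d e f
        + 4 * sym6 (fun a b c d e f => covA V a b * covD V c d e f) a b c d e f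
        ≠ 0) := by
  refine ⟨fun R hR a b c d e f => ?_, Vex, isWeyl_Vex, 0, 0, 0, 0, 0, 0, ?_⟩
  · rw [expression_eq, polarisation_s9 (obstruction (VR R)) (obstruction_diag R hR)
      (fun j => Pi.single (![a, b, c, d, e, f] j) 1), mul_zero]
  · have h0 : ∀ j : Fin 6, (![0, 0, 0, 0, 0, 0] : Fin 6 → Fin 3) j = 0 := by
      intro j
      fin_cases j <;> rfl
    rw [expression_eq]
    simp only [h0, obstruction_Vex]
    simp [Finset.card_univ, Fintype.card_perm, Nat.factorial]
end
end
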